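/- arXiv:2602.01847 — 2 statements merged into one kernel-verified Lean document; each statement's English description precedes it below -/
import Mathlib

section
/- Let r be a positive integer, let ψ be the distribution degenerate at r (every edge receives exactly r labels), and let 𝒢=(V,E,λ) be a sample from Γ_{[n]}(ψ). Then for every α>0, the probability that (2−α)·log n/(r·n) ≤ Double(𝒢) ≤ (2+α)·log n/(r·n) tends to 1 as n→∞. -/
open MeasureTheory ProbabilityTheory Filter Set
open scoped ENNReal NNReal Topology

noncomputable section

namespace RTG

/-- A temporal graph on vertex type `V`, given by the finite set of real time labels
attached to each potential edge (unordered pair of vertices). -/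
abbrev TGraph (V : Type*) := Sym2 V → Finset ℝ

/-- `P` is a strict partial order supported on the set `s`. -/
def StrictPartialOrderOn {α : Type*} (s : Set α) (P : α → α → Prop) : Prop :=
  (∀ a, ¬ P a a) ∧ (∀ a b c, P a b → P b c → P a c) ∧ ∀ a b, P a b → a ∈ s ∧ b ∈ s

/-- The temporal graph `Λ` contains `(H, P)` as a `δ`-temporal motif. -/
def Contains {VH V : Type*} (H : SimpleGraph VH) (P : Sym2 VH → Sym2 VH → Prop)
    (Λ : TGraph V) (δ : ℝ) : Prop :=
  ∃ Φ : VH → V, Function.Injective Φ ∧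
    ∃ lab : Sym2 VH → ℝ,
      (∀ e ∈ H.edgeSet, lab e ∈ Λ (Sym2.map Φ e)) ∧
      (∀ e f, P e f → lab e < lab f) ∧
      (∀ e ∈ H.edgeSet, ∀ f ∈ H.edgeSet, lab e - lab f < δ)

/-- The sparsity `ρ_H` of a graph `H`: the minimum over subgraphs with at least two
edges of `|V_I| / (|E_I| - 1)`. -/
def sparsity {VH : Type*} (H : SimpleGraph VH) : ℝ :=
  sInf {x : ℝ | ∃ I : H.Subgraph, 2 ≤ I.edgeSet.ncard ∧
    x = (I.verts.ncard : ℝ) / ((I.edgeSet.ncard : ℝ) - 1)}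

/-- The space of label data on a single edge: a number `k` of labels together with the
tuple of `k` label values (indexed in order of sampling). -/
abbrev LabelSpace := Σ k : ℕ, Fin k → ℝ

/-- The uniform distribution on `(0, 1]`. -/
def unif01 : Measure ℝ := volume.restrict (Set.Ioc 0 1)

/-- The uniform distribution on `{1, …, T}` (as a measure on `ℝ`). -/
def unifDisc (T : ℕ) : Measure ℝ :=
  (T : ℝ≥0∞)⁻¹ • ∑ k ∈ Finset.Icc 1 T, Measure.dirac (k : ℝ)

/-- The distribution of the label data of a single edge: the number of labels is drawn
according to `ψ` and, independently, each label value is drawn according to `ν`. -/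
def edgeMeasure (ν : Measure ℝ) (ψ : Measure ℕ) : Measure LabelSpace :=
  Measure.sum fun k => ψ {k} • (Measure.pi fun _ : Fin k => ν).map (Sigma.mk k)

/-- The doubly random temporal graph model on vertex set `V` with label value
distribution `ν` and label multiplicity distribution `ψ`: all edges receive independent
identically distributed label data. -/
def model (V : Type*) [Fintype V] [DecidableEq V] (ν : Measure ℝ) (ψ : Measure ℕ) :
    Measure (Sym2 V → LabelSpace) :=
  Measure.pi fun _ : Sym2 V => edgeMeasure ν ψ

/-- The continuous doubly random temporal graph `Γ_V(ψ)`. -/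
abbrev contModel (V : Type*) [Fintype V] [DecidableEq V] (ψ : Measure ℕ) :
    Measure (Sym2 V → LabelSpace) := model V unif01 ψ

/-- The discrete doubly random temporal graph `Γ_V(ψ, T)`. -/
abbrev discModel (V : Type*) [Fintype V] [DecidableEq V] (ψ : Measure ℕ) (T : ℕ) :
    Measure (Sym2 V → LabelSpace) := model V (unifDisc T) ψ

/-- The temporal graph determined by a sample `ω` of the model: each non-loop edge
carries the sampled set of labels. -/
def toTGraph {V : Type*} [DecidableEq V] (ω : Sym2 V → LabelSpace) : TGraph V :=
  fun e => if e.IsDiag then ∅ else Finset.image (ω e).2 Finset.univ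

/-- The `T`-discretization of a temporal graph: each label `l` is replaced by `⌈T·l⌉`. -/
def discretize {V : Type*} (T : ℕ) (Λ : TGraph V) : TGraph V :=
  fun e => (Λ e).image fun l => ((⌈(T : ℝ) * l⌉ : ℤ) : ℝ)

/-- `ψ` is a label multiplicity distribution: a probability distribution on `ℕ` with
positive finite mean and finite second moment. -/
def IsLMD (ψ : Measure ℕ) : Prop :=
  IsProbabilityMeasure ψ ∧ Integrable (fun k : ℕ => (k : ℝ)) ψ ∧
    Integrable (fun k : ℕ => (k : ℝ) ^ 2) ψ ∧ 0 < ∫ k, (k : ℝ) ∂ψ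

/-- The mean `r` of a label multiplicity distribution. -/
def lmdMean (ψ : Measure ℕ) : ℝ := ∫ k, (k : ℝ) ∂ψ

/-- The second moment `r₂` of a label multiplicity distribution. -/
def lmdSq (ψ : Measure ℕ) : ℝ := ∫ k, (k : ℝ) ^ 2 ∂ψ

/-- `q = P[Q > 0]` for a label multiplicity distribution. -/
def lmdPos (ψ : Measure ℕ) : ℝ := (ψ {k | 0 < k}).toReal

/-- `v` is reachable from the set `S` by time `t` in the temporal graph `Λ`. -/
def ReachBy {V : Type*} (Λ : TGraph V) (S : Set V) (t : ℝ) (v : V) : Prop :=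
  v ∈ S ∨ ∃ (k : ℕ) (f : ℕ → V) (ts : ℕ → ℝ), 0 < k ∧ f 0 ∈ S ∧ f k = v ∧
    (∀ i < k, ts i ∈ Λ s(f i, f (i + 1))) ∧
    (∀ i j, i < j → j < k → ts i < ts j) ∧ ts (k - 1) ≤ t

/-- The reachability ball `B_Λ(S, t)`. -/
def ball {V : Type*} (Λ : TGraph V) (S : Set V) (t : ℝ) : Set V := {v | ReachBy Λ S t v}

/-- The doubling time of the set `S` in `Λ` (with value `∞` if the reachability ball
never doubles in size). -/
def doubleTime {V : Type*} (Λ : TGraph V) (S : Set V) : ℝ≥0∞ :=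
  ⨅ (t : ℝ) (_ : 0 ≤ t ∧ 2 * S.ncard ≤ (ball Λ S t).ncard), ENNReal.ofReal t

/-- The doubling time of the temporal graph `Λ`: the maximum doubling time over all
nonempty vertex sets of size at most half the number of vertices. -/
def doubleAll {V : Type*} [Fintype V] (Λ : TGraph V) : ℝ≥0∞ :=
  ⨆ (S : Set V) (_ : S.Nonempty ∧ 2 * S.ncard ≤ Fintype.card V), doubleTime Λ S

/-- `Double⁻`: the maximum doubling time over nonempty sets of size at most `n/4`. -/
def doubleSmall {V : Type*} [Fintype V] (Λ : TGraph V) : ℝ≥0∞ :=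
  ⨆ (S : Set V) (_ : S.Nonempty ∧ 4 * S.ncard ≤ Fintype.card V), doubleTime Λ S

/-- `Double⁺`: the maximum doubling time over sets of size in `(n/4, n/2]`. -/
def doubleLarge {V : Type*} [Fintype V] (Λ : TGraph V) : ℝ≥0∞ :=
  ⨆ (S : Set V) (_ : Fintype.card V < 4 * S.ncard ∧ 2 * S.ncard ≤ Fintype.card V),
    doubleTime Λ S

/-- The partial reversal `ℛ(Λ, t)`: every label `l < t` is replaced by `t - l`. -/
def reverse {V : Type*} (Λ : TGraph V) (t : ℝ) : TGraph V :=
  fun e => (Λ e).image fun l => if l < t then t - l else l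

/-- The rank of a time `x` among all the labels of the sample `ω`: the number of labels
(on genuine, non-loop, edges) that are at most `x`. -/
def rank {V : Type*} [Fintype V] [DecidableEq V] (ω : Sym2 V → LabelSpace) (x : ℝ) : ℕ :=
  ∑ e ∈ Finset.univ.filter (fun e : Sym2 V => ¬ e.IsDiag),
    Nat.card {i : Fin (ω e).1 // (ω e).2 i ≤ x}

/-- The order discretization `𝒢^O` of the sample `ω`: each label is replaced by its rank
among all labels. -/
def orderDisc {V : Type*} [Fintype V] [DecidableEq V] (ω : Sym2 V → LabelSpace) :
    TGraph V :=
  fun e => if e.IsDiag then ∅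
    else Finset.image (fun i => (rank ω ((ω e).2 i) : ℝ)) Finset.univ

/-! Work with in-balls: a vertex `w` is reached from `S` by time `t` iff `S` meets the in-ball of
`w`.

*Upper bound.* Explore backwards from `w`, starting at time `t`, in short disjoint time windows. The
labels leaving the explored set have not been inspected in the next window, so the potential
`(n - s) / (s - 1 + δ)` of the number `s` of explored vertices shrinks in expectation by a factor
`1 - (1 - 3 * δ) * r * n * τ` in each window of length `τ`. It starts below `n / δ`, and it is at
least `δ` as long as `s ≤ (1 - δ) * n`. At time `(2 + α) * log n / (r * n)` the expectation is
`o(1 / n)`, so all in-balls have more than `(1 - δ) * n` vertices, and every set with more than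
`δ * n` vertices reaches everything. A smaller set `S` that has not doubled has a disjoint `T` of
the same size such that no label between `S` and the complement of `S ∪ T` is early; a union bound
over the pairs `(S, T)` excludes this.

*Lower bound.* Let `a = (1 - α / 2) * log n / (r * n)`. A second moment bound gives about
`n * exp (-(r * n * a))` vertices with no label in `(a, 2 * a]`, and a first moment bound over
increasing walks shows that most of them have an in-ball of size less than `n / 4` at time `a`. Such
an in-ball is unchanged until time `2 * a`; for two such vertices, a set of size `⌊n / 2⌋` that
avoids both in-balls has not doubled by then. -/

section ProductMeasures

lemma measurableSet_forall_mem {ι : Type*} {X : ι → Type*} [∀ i, MeasurableSpace (X i)]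
    (F : Finset ι) {B : ∀ i, Set (X i)} (hB : ∀ i, MeasurableSet (B i)) :
    MeasurableSet {x : ∀ i, X i | ∀ i ∈ F, x i ∈ B i} := by
  simp only [ofPred_forall]
  exact F.measurableSet_biInter fun i _ => measurable_pi_apply i (hB i)

lemma pi_real_forall_mem {ι α : Type*} [Fintype ι] [MeasurableSpace α] (ν : Measure α)
    [IsProbabilityMeasure ν] (F : Finset ι) (B : Set α) :
    (Measure.pi fun _ : ι => ν).real {x | ∀ i ∈ F, x i ∈ B} = ν.real B ^ F.card := by
  have : {x : ι → α | ∀ i ∈ F, x i ∈ B} = (F : Set ι).pi fun _ => B := by ext; simp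
  rw [this, measureReal_def, Measure.pi_pi_finset, Finset.prod_const, ENNReal.toReal_pow,
    measureReal_def]

lemma prob_inter_compl_le_mul {α : Type*} [MeasurableSpace α] {ν : Measure α}
    [IsProbabilityMeasure ν] {C W : Set α} (hC : MeasurableSet C) (hW : MeasurableSet W)
    (hWC : C.Nonempty → W ⊆ C) : ν (C ∩ Wᶜ) ≤ ν Wᶜ * ν C := by
  rcases C.eq_empty_or_nonempty with rfl | hne
  · simp
  calc ν (C ∩ Wᶜ)
      = ν (C ∩ Wᶜ) * ν W + ν (C ∩ Wᶜ) * ν Wᶜ := by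
        rw [← mul_add, prob_add_prob_compl hW, mul_one]
    _ ≤ ν Wᶜ * ν W + ν (C ∩ Wᶜ) * ν Wᶜ := by gcongr; exact inter_subset_right
    _ = ν Wᶜ * (ν (C ∩ W) + ν (C \ W)) := by
        rw [inter_eq_self_of_subset_right (hWC hne), sdiff_eq]; ring
    _ = ν Wᶜ * ν C := by rw [measure_inter_add_sdiff C hW]

lemma pi_map_comp_of_injective {ι κ α : Type*} [Fintype ι] [Fintype κ] [MeasurableSpace α]
    (ν : Measure α) [IsProbabilityMeasure ν] {c : κ → ι} (hc : Function.Injective c) :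
    (Measure.pi fun _ : ι => ν).map (fun x k => x (c k)) = Measure.pi fun _ : κ => ν := by
  have hindep : iIndepFun (fun (i : ι) (x : ι → α) => x i) (Measure.pi fun _ : ι => ν) :=
    iIndepFun_pi (X := fun _ => id) fun _ => aemeasurable_id
  rw [(iIndepFun_iff_map_fun_eq_pi_map
    fun k => (measurable_pi_apply (c k)).aemeasurable).1 (hindep.precomp hc)]
  congr
  ext k : 1
  exact (measurePreserving_eval _ (c k)).map_eq

variable {ι : Type*} [Fintype ι] [DecidableEq ι] {X : ι → Type*} [∀ i, MeasurableSpace (X i)]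
  (μ : ∀ i, Measure (X i)) [∀ i, IsProbabilityMeasure (μ i)]

lemma pi_inter_notMem_le {D : Set (∀ i, X i)} (hD : MeasurableSet D) {i : ι} {W : Set (X i)}
    (hW : MeasurableSet W) (h : ∀ x ∈ D, ∀ y ∈ W, Function.update x i y ∈ D) :
    Measure.pi μ (D ∩ {x | x i ∉ W}) ≤ μ i Wᶜ * Measure.pi μ D := by
  have hDW : MeasurableSet (D ∩ {x | x i ∉ W}) := hD.inter (measurable_pi_apply i hW.compl)
  rw [← lintegral_indicator_one hDW, ← lintegral_indicator_one hD,
    ← lintegral_const_mul _ (measurable_one.indicator hD)]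
  refine lintegral_le_of_lmarginal_le {i} (measurable_one.indicator hDW)
    ((measurable_one.indicator hD).const_mul _) fun x => ?_
  have hupdate : Measurable fun y : X i => Function.update x i y := measurable_update x
  set C : Set (X i) := (fun y => Function.update x i y) ⁻¹' D
  have hCW : (fun y => Function.update x i y) ⁻¹' (D ∩ {x | x i ∉ W}) = C ∩ Wᶜ := by
    ext y; simp [C]
  have hsection : ∀ E : Set (∀ i, X i), MeasurableSet E →
      ∫⁻ y, E.indicator 1 (Function.update x i y) ∂μ i
        = μ i ((fun y => Function.update x i y) ⁻¹' E) := fun E hE =>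
    lintegral_indicator_one (hupdate hE)
  simp only [lmarginal_singleton]
  rw [lintegral_const_mul' _ _ (measure_ne_top _ _), hsection _ hDW, hsection _ hD, hCW]
  refine prob_inter_compl_le_mul (hupdate hD) hW fun ⟨z, hz⟩ y hy => ?_
  simpa [C] using h _ hz y hy

/- Principle of deferred decisions: an event that survives the resampling of a coordinate
into its window carries no information favouring that the window is missed. -/
theorem pi_inter_forall_notMem_le {D : Set (∀ i, X i)} (hD : MeasurableSet D)
    {W : ∀ i, Set (X i)} (hW : ∀ i, MeasurableSet (W i)) (F : Finset ι)
    (h : ∀ i ∈ F, ∀ x ∈ D, ∀ y ∈ W i, Function.update x i y ∈ D) :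
    Measure.pi μ (D ∩ {x | ∀ i ∈ F, x i ∉ W i})
      ≤ (∏ i ∈ F, μ i (W i)ᶜ) * Measure.pi μ D := by
  induction F using Finset.induction_on with
  | empty => simp
  | insert i F hiF ih =>
    have hmeas : MeasurableSet {x : ∀ i, X i | ∀ j ∈ F, x j ∉ W j} :=
      measurableSet_forall_mem F fun j => (hW j).compl
    have hsplit : D ∩ {x | ∀ j ∈ insert i F, x j ∉ W j}
        = (D ∩ {x | ∀ j ∈ F, x j ∉ W j}) ∩ {x | x i ∉ W i} := by
      ext x; simp only [Finset.forall_mem_insert]; grind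
    have hupdate : ∀ x ∈ D ∩ {x | ∀ j ∈ F, x j ∉ W j}, ∀ y ∈ W i,
        Function.update x i y ∈ D ∩ {x | ∀ j ∈ F, x j ∉ W j} := fun x hx y hy => by
      refine ⟨h i (F.mem_insert_self i) x hx.1 y hy, fun j hj => ?_⟩
      rw [Function.update_of_ne (ne_of_mem_of_not_mem hj hiF)]
      exact hx.2 j hj
    rw [hsplit, Finset.prod_insert hiF, mul_assoc]
    refine (pi_inter_notMem_le μ (hD.inter hmeas) (hW i) hupdate).trans ?_
    gcongr
    exact ih fun j hj => h j (Finset.mem_insert_of_mem hj)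

end ProductMeasures

section OrderedTuples

variable {α : Type*} [LinearOrder α]

lemma perm_eq_of_strictMono_comp {k : ℕ} {y : Fin k → α} {σ τ : Equiv.Perm (Fin k)}
    (hσ : StrictMono (y ∘ σ)) (hτ : StrictMono (y ∘ τ)) : σ = τ := by
  have hinj : Function.Injective y := (Equiv.injective_comp σ y).1 hσ.injective
  have hcomp : y ∘ σ = y ∘ τ := (hσ.range_inj hτ).1 (by simp [range_comp])
  ext1 i
  exact hinj (congrFun hcomp i)

variable [TopologicalSpace α] [OrderClosedTopology α] [SecondCountableTopology α]
  [MeasurableSpace α] [OpensMeasurableSpace α]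

lemma measurableSet_strictMono_forall_mem {B : Set α} (hB : MeasurableSet B) {k : ℕ} :
    MeasurableSet {y : Fin k → α | StrictMono y ∧ ∀ i, y i ∈ B} := by
  simp only [StrictMono, ofPred_and, ofPred_forall]
  exact .inter (.iInter fun i => .iInter fun j => .iInter fun _ =>
    measurableSet_lt (measurable_pi_apply i) (measurable_pi_apply j))
    (.iInter fun i => measurable_pi_apply i hB)

lemma pi_real_strictMono_le (ν : Measure α) [IsProbabilityMeasure ν] {B : Set α}
    (hB : MeasurableSet B) (k : ℕ) :
    (Measure.pi fun _ : Fin k => ν).real {y | StrictMono y ∧ ∀ i, y i ∈ B}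
      ≤ ν.real B ^ k / k.factorial := by
  set P := Measure.pi fun _ : Fin k => ν with hP
  set A : Equiv.Perm (Fin k) → Set (Fin k → α) :=
    fun σ => {y | StrictMono (y ∘ σ) ∧ ∀ i, y (σ i) ∈ B}
  have hA_one : MeasurableSet {y : Fin k → α | StrictMono y ∧ ∀ i, y i ∈ B} :=
    measurableSet_strictMono_forall_mem hB
  have hA_meas : ∀ σ, MeasurableSet (A σ) := fun σ =>
    (measurable_pi_lambda (fun (y : Fin k → α) i => y (σ i)) fun i => measurable_pi_apply _) hA_one
  have hA_eq : ∀ σ, P.real (A σ) = P.real {y | StrictMono y ∧ ∀ i, y i ∈ B} := fun σ => by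
    conv_rhs => rw [hP, ← pi_map_comp_of_injective ν σ.injective]
    rw [map_measureReal_apply (by fun_prop) hA_one]
    rfl
  have hA_disj : Pairwise (Function.onFun Disjoint A) := fun σ τ hne =>
    disjoint_left.2 fun y hσ hτ => hne (perm_eq_of_strictMono_comp hσ.1 hτ.1)
  have hA_sub : (⋃ σ, A σ) ⊆ {y | ∀ i ∈ Finset.univ, y i ∈ B} :=
    iUnion_subset fun σ y hy i _ => by simpa using hy.2 (σ.symm i)
  have hsum : k.factorial * P.real {y | StrictMono y ∧ ∀ i, y i ∈ B} ≤ ν.real B ^ k := calc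
    _ = ∑ σ, P.real (A σ) := by simp [hA_eq, Fintype.card_perm]
    _ = P.real (⋃ σ, A σ) := (measureReal_iUnion_fintype hA_disj hA_meas).symm
    _ ≤ P.real {y | ∀ i ∈ Finset.univ, y i ∈ B} := measureReal_mono hA_sub
    _ = ν.real B ^ k := by rw [hP, pi_real_forall_mem]; simp
  rwa [le_div_iff₀' (by positivity)]

lemma pi_real_strictMono_comp_le {ι : Type*} [Fintype ι] (ν : Measure α) [IsProbabilityMeasure ν]
    {B : Set α} (hB : MeasurableSet B) {k : ℕ} {c : Fin k → ι} (hc : Function.Injective c) :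
    (Measure.pi fun _ : ι => ν).real {x | (StrictMono fun i => x (c i)) ∧ ∀ i, x (c i) ∈ B}
      ≤ ν.real B ^ k / k.factorial := by
  classical
  refine le_trans (le_of_eq ?_) (pi_real_strictMono_le ν hB k)
  rw [← pi_map_comp_of_injective ν hc, map_measureReal_apply (by fun_prop)]
  · rfl
  · exact measurableSet_strictMono_forall_mem hB

end OrderedTuples

section Counting

lemma natCast_card_filter_eq_sum_indicator {ι Ω : Type*} [Fintype ι] (A : ι → Set Ω) (x : Ω)
    [DecidablePred fun i => x ∈ A i] :
    ((Finset.univ.filter fun i => x ∈ A i).card : ℝ) = ∑ i, (A i).indicator 1 x := by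
  classical simp [Set.indicator, Finset.sum_boole]

variable {ι Ω : Type*} [Fintype ι] [MeasurableSpace Ω] (μ : Measure Ω)

lemma mul_measureReal_le_card_le_sum [IsFiniteMeasure μ] (A : ι → Set Ω)
    [∀ x, DecidablePred fun i => x ∈ A i] {c : ℝ} (hc : 0 ≤ c) :
    c * μ.real {x | c ≤ (Finset.univ.filter fun i => x ∈ A i).card} ≤ ∑ i, μ.real (A i) := by
  set A' : ι → Set Ω := fun i => toMeasurable μ (A i)
  have hint : ∀ i, Integrable ((A' i).indicator (1 : Ω → ℝ)) μ := fun i =>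
    (integrable_const 1).indicator (measurableSet_toMeasurable _ _)
  have hsub : {x | c ≤ (Finset.univ.filter fun i => x ∈ A i).card}
      ⊆ {x | c ≤ ∑ i, (A' i).indicator (1 : Ω → ℝ) x} := fun x hx => by
    refine le_trans (mem_ofPred_eq ▸ hx) ?_
    rw [natCast_card_filter_eq_sum_indicator]
    exact Finset.sum_le_sum fun i _ =>
      indicator_le_indicator_of_subset (subset_toMeasurable μ _) (fun _ => zero_le_one) x
  calc c * μ.real {x | c ≤ (Finset.univ.filter fun i => x ∈ A i).card}
      ≤ c * μ.real {x | c ≤ ∑ i, (A' i).indicator (1 : Ω → ℝ) x} := by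
        gcongr; exact measure_ne_top _ _
    _ ≤ ∫ x, ∑ i, (A' i).indicator (1 : Ω → ℝ) x ∂μ :=
        mul_meas_ge_le_integral_of_nonneg
          (.of_forall fun x => Finset.sum_nonneg fun i _ => indicator_nonneg (by simp) x)
          (integrable_finsetSum _ fun i _ => hint i) c
    _ = ∑ i, μ.real (A i) := by
        rw [integral_finsetSum _ fun i _ => hint i]
        simp only [A', integral_indicator_one (measurableSet_toMeasurable _ _),
          measureReal_def, measure_toMeasurable]

lemma variance_sum_indicator_le [IsProbabilityMeasure μ] {A : ι → Set Ω}
    (hA : ∀ i, MeasurableSet (A i)) {p q : ℝ} (hp : ∀ i, μ.real (A i) = p) (hpq : p ^ 2 ≤ q)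
    (hq : ∀ i j, i ≠ j → μ.real (A i ∩ A j) ≤ q) :
    Var[∑ i, (A i).indicator 1; μ]
      ≤ Fintype.card ι * p + (Fintype.card ι : ℝ) ^ 2 * (q - p ^ 2) := by
  classical
  set X : ι → Ω → ℝ := fun i => (A i).indicator 1 with hX_def
  have hX : ∀ i, MemLp (X i) 2 μ := fun i => (memLp_const 1).indicator (hA i)
  have hmean : ∀ i, μ[X i] = p := fun i => by rw [integral_indicator_one (hA i), hp]
  have hmul : ∀ i j, μ[X i * X j] = μ.real (A i ∩ A j) := fun i j => by
    rw [← integral_indicator_one ((hA i).inter (hA j))]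
    simp only [hX_def, inter_indicator_one]
  have hcov : ∀ i j, cov[X i, X j; μ] ≤ (if i = j then p else 0) + (q - p ^ 2) := fun i j => by
    rw [covariance_eq_sub (hX i) (hX j), hmul, hmean, hmean]
    split_ifs with hij
    · subst hij; rw [inter_self, hp]; nlinarith [sq_nonneg p]
    · linarith [hq i j hij]
  calc Var[∑ i, X i; μ] = ∑ i, ∑ j, cov[X i, X j; μ] := variance_sum hX
    _ ≤ ∑ i : ι, ∑ j : ι, ((if i = j then p else 0) + (q - p ^ 2)) :=
        Finset.sum_le_sum fun i _ => Finset.sum_le_sum fun j _ => hcov i j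
    _ = Fintype.card ι * p + (Fintype.card ι : ℝ) ^ 2 * (q - p ^ 2) := by
        simp [Finset.sum_add_distrib]; ring

theorem sq_mul_measureReal_card_le_half_le [IsProbabilityMeasure μ] {A : ι → Set Ω}
    [∀ x, DecidablePred fun i => x ∈ A i] (hA : ∀ i, MeasurableSet (A i)) {p q : ℝ}
    (hp : ∀ i, μ.real (A i) = p) (hpq : p ^ 2 ≤ q)
    (hq : ∀ i j, i ≠ j → μ.real (A i ∩ A j) ≤ q) (h0 : 0 < Fintype.card ι * p) :
    ((Fintype.card ι : ℝ) * p / 2) ^ 2 *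
        μ.real {x | (Finset.univ.filter fun i => x ∈ A i).card ≤ (Fintype.card ι * p / 2 : ℝ)}
      ≤ Fintype.card ι * p + (Fintype.card ι : ℝ) ^ 2 * (q - p ^ 2) := by
  set n : ℝ := (Fintype.card ι : ℝ) with hn
  set X : ι → Ω → ℝ := fun i => (A i).indicator 1
  have hX : ∀ i, MemLp (X i) 2 μ := fun i => (memLp_const 1).indicator (hA i)
  have hmean : μ[∑ i, X i] = n * p := by
    simp only [Finset.sum_apply]
    rw [integral_finsetSum _ fun i _ => (hX i).integrable one_le_two]
    simp [X, integral_indicator_one (hA _), hp, hn]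
  have hsub : {x | ((Finset.univ.filter fun i => x ∈ A i).card : ℝ) ≤ n * p / 2}
      ⊆ {x | n * p / 2 ≤ |(∑ i, X i) x - μ[∑ i, X i]|} := fun x hx => by
    simp only [mem_ofPred_eq, natCast_card_filter_eq_sum_indicator] at hx
    rw [mem_ofPred_eq, hmean, Finset.sum_apply]
    exact le_abs.2 (.inr (by linarith))
  have hchebyshev : μ.real {x | n * p / 2 ≤ |(∑ i, X i) x - μ[∑ i, X i]|}
      ≤ Var[∑ i, X i; μ] / (n * p / 2) ^ 2 :=
    ENNReal.toReal_le_of_le_ofReal (by have := variance_nonneg (∑ i, X i) μ; positivity)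
      (meas_ge_le_variance_div_sq (memLp_finsetSum' _ fun i _ => hX i) (by linarith))
  rw [le_div_iff₀' (by positivity)] at hchebyshev
  exact (mul_le_mul_of_nonneg_left (measureReal_mono hsub) (sq_nonneg _)).trans
    (hchebyshev.trans (variance_sum_indicator_le μ hA hp hpq hq))

end Counting

section Journeys

variable {V : Type*} {Λ : TGraph V} {I J : Set ℝ} {s t : ℝ} {S : Set V} {u v w : V}

/-- `Journey Λ I u v`: there is a (possibly trivial) walk `u = f 0, …, f k = v` crossing its
edges at strictly increasing labels, all of which lie in the time window `I`. The values of `f`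
beyond `k` and of `ts` from `k` on are irrelevant. -/
def Journey (Λ : TGraph V) (I : Set ℝ) (u v : V) : Prop :=
  ∃ (k : ℕ) (f : ℕ → V) (ts : ℕ → ℝ), f 0 = u ∧ f k = v ∧
    (∀ i < k, ts i ∈ Λ s(f i, f (i + 1)) ∧ ts i ∈ I) ∧ ∀ i j, i < j → j < k → ts i < ts j

lemma Journey.refl (Λ : TGraph V) (I : Set ℝ) (u : V) : Journey Λ I u u :=
  ⟨0, fun _ => u, 0, rfl, rfl, by simp, by simp⟩

lemma Journey.mono (h : Journey Λ I u v) (hIJ : I ⊆ J) : Journey Λ J u v := by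
  obtain ⟨k, f, ts, h0, hk, hlabel, hlt⟩ := h
  exact ⟨k, f, ts, h0, hk, fun i hi => ⟨(hlabel i hi).1, hIJ (hlabel i hi).2⟩, hlt⟩

lemma Journey.cons (h : Journey Λ I v w) {l : ℝ} (hl : l ∈ Λ s(u, v)) (hlJ : l ∈ J)
    (hJI : ∀ a ∈ J, ∀ b ∈ I, a < b) : Journey Λ (J ∪ I) u w := by
  obtain ⟨k, f, ts, rfl, hk, hlabel, hlt⟩ := h
  refine ⟨k + 1, fun i => i.casesOn u f, fun i => i.casesOn l ts, rfl, hk, ?_, ?_⟩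
  · rintro (_ | i) hi
    · exact ⟨hl, .inl hlJ⟩
    · exact ⟨(hlabel i (by lia)).1, .inr (hlabel i (by lia)).2⟩
  · rintro (_ | i) (_ | j) hij hj
    · lia
    · exact hJI _ hlJ _ (hlabel j (by lia)).2
    · lia
    · exact hlt i j (by lia) (by lia)

lemma Journey.exists_first_visit (h : Journey Λ I u w) :
    ∃ (k : ℕ) (f : ℕ → V) (ts : ℕ → ℝ), f 0 = u ∧ f k = w ∧ (∀ i < k, f i ≠ w) ∧
      (∀ i < k, ts i ∈ Λ s(f i, f (i + 1)) ∧ ts i ∈ I) ∧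
      ∀ i j, i < j → j < k → ts i < ts j := by
  classical
  obtain ⟨k, f, ts, h0, hk, hlabel, hlt⟩ := h
  have hvisit : ∃ m, f m = w := ⟨k, hk⟩
  have hle : Nat.find hvisit ≤ k := Nat.find_le hk
  exact ⟨Nat.find hvisit, f, ts, h0, Nat.find_spec hvisit, fun i hi => Nat.find_min hvisit hi,
    fun i hi => hlabel i (by lia), fun i j hij hj => hlt i j hij (by lia)⟩

lemma mem_ball_iff_exists_journey : v ∈ ball Λ S t ↔ ∃ u ∈ S, Journey Λ (Iic t) u v := by
  constructor
  · rintro (hv | ⟨k, f, ts, hk, h0, rfl, hlabel, hlt, hlast⟩)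
    · exact ⟨v, hv, .refl Λ _ v⟩
    · refine ⟨f 0, h0, k, f, ts, rfl, rfl, fun i hi => ⟨hlabel i hi, ?_⟩, hlt⟩
      rcases eq_or_lt_of_le (Nat.le_sub_one_of_lt hi) with rfl | hlt_last
      · exact hlast
      · exact (hlt i (k - 1) hlt_last (by lia)).le.trans hlast
  · rintro ⟨u, hu, k, f, ts, rfl, rfl, hlabel, hlt⟩
    rcases Nat.eq_zero_or_pos k with rfl | hk
    · exact .inl hu
    · exact .inr ⟨k, f, ts, hk, hu, rfl, fun i hi => (hlabel i hi).1, hlt,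
        (hlabel (k - 1) (by lia)).2⟩

lemma subset_ball (Λ : TGraph V) (S : Set V) (t : ℝ) : S ⊆ ball Λ S t := fun _ => Or.inl

lemma ball_mono (Λ : TGraph V) (S : Set V) (hst : s ≤ t) : ball Λ S s ⊆ ball Λ S t := by
  intro v hv
  obtain ⟨u, hu, hjourney⟩ := mem_ball_iff_exists_journey.1 hv
  exact mem_ball_iff_exists_journey.2 ⟨u, hu, hjourney.mono (Iic_subset_Iic.2 hst)⟩

lemma mem_ball_of_label (hu : u ∈ S) {l : ℝ} (hl : l ∈ Λ s(u, v)) (hlt : l ≤ t) :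
    v ∈ ball Λ S t :=
  mem_ball_iff_exists_journey.2 ⟨u, hu,
    ((Journey.refl Λ ∅ v).cons hl (mem_Iic.2 hlt) (by simp)).mono (by simp)⟩

/-- The in-ball of `w` at time `t`: the vertices from which `w` is reachable by time `t`. -/
def inBall (Λ : TGraph V) (w : V) (t : ℝ) : Set V := {u | Journey Λ (Iic t) u w}

lemma mem_ball_iff_inter_inBall_nonempty : w ∈ ball Λ S t ↔ (S ∩ inBall Λ w t).Nonempty :=
  mem_ball_iff_exists_journey

lemma inBall_subset_of_forall_label_le (hw : ∀ v, ∀ l ∈ Λ s(v, w), l ≤ t → l ≤ s) :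
    inBall Λ w t ⊆ inBall Λ w s := by
  rintro u ⟨k, f, ts, h0, rfl, hlabel, hlt⟩
  refine ⟨k, f, ts, h0, rfl, fun i hi => ⟨(hlabel i hi).1, ?_⟩, hlt⟩
  obtain ⟨m, rfl⟩ := Nat.exists_eq_add_one_of_ne_zero (Nat.ne_zero_of_lt hi)
  have hlast : ts m ≤ s := hw _ _ (hlabel m m.lt_succ_self).1 (hlabel m m.lt_succ_self).2
  rcases Nat.lt_succ_iff_lt_or_eq.1 hi with him | rfl
  · exact (hlt i m him m.lt_succ_self).le.trans hlast
  · exact hlast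

end Journeys

section DoublingTime

variable {V : Type*} {Λ : TGraph V} {s t : ℝ}

lemma ofReal_le_doubleTime [Finite V] {S : Set V} (h : (ball Λ S t).ncard < 2 * S.ncard) :
    ENNReal.ofReal t ≤ doubleTime Λ S := by
  refine le_iInf₂ fun t' ht' => ENNReal.ofReal_le_ofReal ?_
  by_contra! hlt
  have := ncard_le_ncard (ball_mono Λ S hlt.le)
  lia

variable [Fintype V]

lemma doubleAll_le_ofReal (ht : 0 ≤ t)
    (h : ∀ S : Set V, S.Nonempty → 2 * S.ncard ≤ Fintype.card V →
      2 * S.ncard ≤ (ball Λ S t).ncard) :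
    doubleAll Λ ≤ ENNReal.ofReal t :=
  iSup₂_le fun S hS => iInf₂_le t ⟨ht, h S hS.1 hS.2⟩

lemma exists_finset_card_eq_disjoint_of_card_ball_lt [DecidableEq V] {S : Finset V}
    (hS : 2 * S.card ≤ Fintype.card V) (h : (ball Λ (S : Set V) t).ncard < 2 * S.card) :
    ∃ T : Finset V, Disjoint S T ∧ T.card = S.card ∧
      ∀ u ∈ S, ∀ v ∉ S ∪ T, ∀ l ∈ Λ s(u, v), t < l := by
  classical
  set B : Finset V := (ball Λ (S : Set V) t).toFinset with hB
  have hSB : S ⊆ B := fun u hu => by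
    simpa [hB] using subset_ball Λ S t (Finset.mem_coe.2 hu)
  have hBS : (B \ S).card ≤ S.card := by
    rw [ncard_eq_toFinset_card'] at h
    rw [Finset.card_sdiff_of_subset hSB]
    lia
  obtain ⟨T, hBT, hTS, hcard⟩ := Finset.exists_subsuperset_card_eq
    (Finset.sdiff_subset_sdiff B.subset_univ subset_rfl) hBS
    (by rw [Finset.card_univ_sdiff]; lia)
  refine ⟨T, (Finset.subset_sdiff.1 hTS).2.symm, hcard, fun u hu v hv l hl => ?_⟩
  by_contra! hle
  have hvB : v ∈ B := by simpa [hB] using mem_ball_of_label (Finset.mem_coe.2 hu) hl hle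
  grind

lemma two_mul_ncard_le_ncard_ball_of_inBall {S : Set V} (hS : 2 * S.ncard ≤ Fintype.card V)
    (h : ∀ w, Fintype.card V < S.ncard + (inBall Λ w t).ncard) :
    2 * S.ncard ≤ (ball Λ S t).ncard := by
  have hball : ball Λ S t = univ := eq_univ_of_forall fun w => by
    rw [mem_ball_iff_inter_inBall_nonempty, ← not_disjoint_iff_nonempty_inter]
    intro hdisj
    have hle := ncard_le_ncard (subset_univ (S ∪ inBall Λ w t))
    rw [ncard_union_eq hdisj, ncard_univ, Nat.card_eq_fintype_card] at hle
    exact absurd (h w) (by lia)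
  rwa [hball, ncard_univ, Nat.card_eq_fintype_card]

/- A set `S` of size `⌊n/2⌋` avoiding both in-balls reaches neither vertex before time `t`, so its
ball misses the two vertices and has size at most `n - 2 < 2⌊n/2⌋`. -/
lemma ofReal_le_doubleAll_of_pair {w₁ w₂ : V} (hne : w₁ ≠ w₂)
    (hlabel : ∀ w ∈ ({w₁, w₂} : Set V), ∀ v, ∀ l ∈ Λ s(v, w), l ≤ t → l ≤ s)
    (hcard : ∀ w ∈ ({w₁, w₂} : Set V), 4 * (inBall Λ w s).ncard ≤ Fintype.card V) :
    ENNReal.ofReal t ≤ doubleAll Λ := by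
  set n := Fintype.card V
  have hn : 1 < n := Fintype.one_lt_card_iff.2 ⟨w₁, w₂, hne⟩
  set R : Set V := inBall Λ w₁ s ∪ inBall Λ w₂ s with hR
  have hRcard : 2 * R.ncard ≤ n := by
    have h₁ := hcard w₁ (by simp)
    have h₂ := hcard w₂ (by simp)
    have := ncard_union_le (inBall Λ w₁ s) (inBall Λ w₂ s)
    lia
  have hRcompl : n / 2 ≤ Rᶜ.ncard := by
    rw [ncard_compl, Nat.card_eq_fintype_card]; lia
  obtain ⟨S, hSR, hS⟩ := exists_subset_card_eq hRcompl
  have hnotMem : ∀ w ∈ ({w₁, w₂} : Set V), w ∉ ball Λ S t := fun w hw hmem => by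
    obtain ⟨u, huS, hu⟩ := mem_ball_iff_inter_inBall_nonempty.1 hmem
    refine hSR huS ?_
    have := inBall_subset_of_forall_label_le (hlabel w hw) hu
    rcases hw with rfl | rfl
    exacts [.inl this, .inr this]
  have hball : (ball Λ S t).ncard ≤ n - 2 := by
    have hsub : ball Λ S t ⊆ ({w₁, w₂} : Set V)ᶜ := fun v hv hmem => hnotMem v hmem hv
    refine (ncard_le_ncard hsub).trans_eq ?_
    rw [ncard_compl, ncard_pair hne, Nat.card_eq_fintype_card]
  have hSne : S.Nonempty := by rw [← ncard_pos]; lia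
  exact (ofReal_le_doubleTime (by lia)).trans (le_iSup₂_of_le S ⟨hSne, by lia⟩ le_rfl)

end DoublingTime

section UniformLabels

instance isProbabilityMeasure_unif01 : IsProbabilityMeasure unif01 := ⟨by simp [unif01]⟩

lemma unif01_real_Ioc {a b : ℝ} (ha : 0 ≤ a) (hab : a ≤ b) (hb : b ≤ 1) :
    unif01.real (Ioc a b) = b - a := by
  rw [measureReal_def, unif01, Measure.restrict_apply measurableSet_Ioc,
    inter_eq_self_of_subset_left (Ioc_subset_Ioc ha hb), Real.volume_Ioc,
    ENNReal.toReal_ofReal (by linarith)]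

lemma unif01_real_compl_Ioc {a b : ℝ} (ha : 0 ≤ a) (hab : a ≤ b) (hb : b ≤ 1) :
    unif01.real (Ioc a b)ᶜ = 1 - (b - a) := by
  rw [probReal_compl_eq_one_sub measurableSet_Ioc, unif01_real_Ioc ha hab hb]

lemma unif01_real_Iic {a : ℝ} (ha : 0 ≤ a) (ha1 : a ≤ 1) : unif01.real (Iic a) = a := by
  have h : Iic a ∩ Ioc 0 1 = Ioc 0 a := by ext x; simp; grind
  rw [measureReal_def, unif01, Measure.restrict_apply measurableSet_Iic, h, Real.volume_Ioc,
    sub_zero, ENNReal.toReal_ofReal ha]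

lemma unif01_real_Ioi {a : ℝ} (ha : 0 ≤ a) (ha1 : a ≤ 1) : unif01.real (Ioi a) = 1 - a := by
  rw [← compl_Iic, probReal_compl_eq_one_sub measurableSet_Iic, unif01_real_Iic ha ha1]

end UniformLabels

section LabelCoordinates

variable {V : Type*} {r : ℕ}

/-- The label data in which the edge `e` carries the `r` labels `x (e, 0), …, x (e, r - 1)`. -/
def ofLabels (x : Sym2 V × Fin r → ℝ) : Sym2 V → LabelSpace := fun e => ⟨r, fun i => x (e, i)⟩

/-- The temporal graph with `r` labels on every edge, given by their joint coordinates. -/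
def labelGraph [DecidableEq V] (x : Sym2 V × Fin r → ℝ) : TGraph V := toTGraph (ofLabels x)

/-- The law of `r` independent labels with distribution `ν` on every edge. -/
abbrev labelMeasure (V : Type*) [Fintype V] [DecidableEq V] (r : ℕ) (ν : Measure ℝ) :
    Measure (Sym2 V × Fin r → ℝ) :=
  Measure.pi fun _ => ν

lemma mem_labelGraph [DecidableEq V] {x : Sym2 V × Fin r → ℝ} {u v : V} {l : ℝ} :
    l ∈ labelGraph x s(u, v) ↔ u ≠ v ∧ ∃ i, x (s(u, v), i) = l := by
  by_cases h : u = v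
  · simp [labelGraph, toTGraph, h]
  · simp only [labelGraph, toTGraph, Sym2.mk_isDiag_iff, h, if_false, Finset.mem_image, ne_eq,
      not_false_eq_true, true_and]
    exact ⟨fun ⟨i, _, hi⟩ => ⟨i, hi⟩, fun ⟨i, hi⟩ => ⟨i, Finset.mem_univ _, hi⟩⟩

lemma measurable_sigmaMk {ι : Type*} {X : ι → Type*} [∀ i, MeasurableSpace (X i)] (i : ι) :
    Measurable (Sigma.mk i : X i → Σ i, X i) := fun _ hs =>
  MeasurableSpace.measurableSet_iInf.1 hs i

lemma measurable_ofLabels : Measurable (ofLabels : (Sym2 V × Fin r → ℝ) → _) :=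
  measurable_pi_lambda _ fun _ =>
    (measurable_sigmaMk r).comp (measurable_pi_lambda _ fun _ => measurable_pi_apply _)

lemma edgeMeasure_dirac (ν : Measure ℝ) (r : ℕ) :
    edgeMeasure ν (Measure.dirac r) = (Measure.pi fun _ : Fin r => ν).map (Sigma.mk r) := by
  ext s hs
  rw [edgeMeasure, Measure.sum_apply _ hs, tsum_eq_single r fun k hk => by simp [hk.symm]]
  simp

variable [DecidableEq V]

/-- The label coordinates of the edges between `S` and `U`. -/
def cutLabels (r : ℕ) (S U : Finset V) : Finset (Sym2 V × Fin r) :=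
  ((S ×ˢ U) ×ˢ (Finset.univ : Finset (Fin r))).image fun p => (s(p.1.1, p.1.2), p.2)

lemma mem_cutLabels {S U : Finset V} {c : Sym2 V × Fin r} :
    c ∈ cutLabels r S U ↔ ∃ u ∈ S, ∃ v ∈ U, s(u, v) = c.1 := by
  obtain ⟨e, i⟩ := c
  simp [cutLabels, and_assoc]

lemma card_cutLabels (r : ℕ) {S U : Finset V} (h : Disjoint S U) :
    (cutLabels r S U).card = S.card * U.card * r := by
  rw [cutLabels, Finset.card_image_of_injOn]
  · simp
  · rintro ⟨⟨u, v⟩, i⟩ huv ⟨⟨u', v'⟩, i'⟩ huv' heq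
    simp only [Finset.coe_product, mem_prod, Finset.mem_coe] at huv huv'
    obtain ⟨⟨rfl, rfl⟩ | ⟨rfl, rfl⟩, rfl⟩ := by simpa using heq
    · rfl
    · exact absurd huv'.1.2 (Finset.disjoint_left.1 h huv.1.1)

variable [Fintype V]

theorem map_ofLabels_labelMeasure (ν : Measure ℝ) [IsProbabilityMeasure ν] :
    (labelMeasure V r ν).map ofLabels = model V ν (Measure.dirac r) := by
  have hcurry : (labelMeasure V r ν).map (MeasurableEquiv.curry (Sym2 V) (Fin r) ℝ)
      = Measure.pi fun _ => Measure.pi fun _ => ν := by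
    simpa only [Measure.infinitePi_eq_pi] using
      Measure.infinitePi_map_curry fun (_ : Sym2 V) (_ : Fin r) => ν
  have hmk := measurable_sigmaMk (X := fun k => Fin k → ℝ) r
  have : SigmaFinite ((Measure.pi fun _ : Fin r => ν).map (Sigma.mk (β := fun k => Fin k → ℝ) r)) :=
    have := Measure.isProbabilityMeasure_map (μ := Measure.pi fun _ : Fin r => ν) hmk.aemeasurable
    inferInstance
  simp only [model, edgeMeasure_dirac]
  rw [← Measure.pi_map_pi fun _ => hmk.aemeasurable, ← hcurry, Measure.map_map (by fun_prop)
    (MeasurableEquiv.measurable _)]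
  rfl

end LabelCoordinates

section Exploration

variable {V : Type*} [Fintype V] [DecidableEq V] {r : ℕ} {W : ℕ → Set ℝ} {w : V}
  {x y : Sym2 V × Fin r → ℝ} {j : ℕ}

open scoped Classical in
/-- The set of vertices found after `j` rounds of exploring backwards from `w`, the `j`-th round
adding the vertices joined to the explored set by a label in the window `W j`. With `W j` earlier
than `W 0, …, W (j - 1)` the explored vertices are sources of journeys to `w`. -/
def explore (W : ℕ → Set ℝ) (w : V) (x : Sym2 V × Fin r → ℝ) : ℕ → Finset V
  | 0 => {w}
  | j + 1 => explore W w x j ∪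
      Finset.univ.filter fun v => ∃ u ∈ explore W w x j, ∃ i, x (s(u, v), i) ∈ W j

lemma mem_explore_succ {v : V} : v ∈ explore W w x (j + 1) ↔
    v ∈ explore W w x j ∨ ∃ u ∈ explore W w x j, ∃ i, x (s(u, v), i) ∈ W j := by
  simp [explore]

lemma explore_mono : Monotone (explore W w x) :=
  monotone_nat_of_le_succ fun _ _ hv => mem_explore_succ.2 (.inl hv)

lemma explore_nonempty : (explore W w x j).Nonempty :=
  ⟨w, explore_mono (Nat.zero_le j) (by simp [explore])⟩

lemma explore_eq_of_agree (h : ∀ l < j, ∀ u ∈ explore W w x l, ∀ v i,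
    y (s(u, v), i) ∈ W l ↔ x (s(u, v), i) ∈ W l) :
    explore W w y j = explore W w x j := by
  induction j with
  | zero => rfl
  | succ j ih =>
    have hj := ih fun l hl => h l (hl.trans j.lt_succ_self)
    ext v
    simp only [mem_explore_succ, hj]
    exact or_congr_right (exists_congr fun u => and_congr_right fun hu =>
      exists_congr fun i => h j j.lt_succ_self u hu v i)

lemma explore_update_cutLabels (hdisj : ∀ l < j, Disjoint (W l) (W j)) {A : Finset V}
    (hA : explore W w x j = A) {c : Sym2 V × Fin r} (hc : c ∈ cutLabels r A Aᶜ) {a : ℝ}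
    (ha : a ∈ W j) : explore W w (Function.update x c a) j = A := by
  rw [← hA]
  refine explore_eq_of_agree fun l hl u hu v i => ?_
  have huA : u ∈ A := hA ▸ explore_mono hl.le hu
  rcases eq_or_ne (s(u, v), i) c with rfl | hne
  · obtain ⟨u', _, v', hv', heq⟩ := mem_cutLabels.1 hc
    have hv : v ∉ A := by
      rcases Sym2.eq_iff.1 heq with ⟨-, rfl⟩ | ⟨rfl, rfl⟩
      exacts [Finset.mem_compl.1 hv', absurd huA (Finset.mem_compl.1 hv')]
    rw [Function.update_self]
    refine iff_of_false (disjoint_right.1 (hdisj l hl) ha) fun hx => hv ?_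
    exact hA ▸ explore_mono (Nat.succ_le_of_lt hl) (mem_explore_succ.2 (.inr ⟨u, hu, i, hx⟩))
  · rw [Function.update_of_ne hne]

lemma measurableSet_explore_eq (hW : ∀ j, MeasurableSet (W j)) (A : Finset V) :
    MeasurableSet {x : Sym2 V × Fin r → ℝ | explore W w x j = A} := by
  have hmem : ∀ j v, Measurable fun x : Sym2 V × Fin r → ℝ => v ∈ explore W w x j := by
    intro j
    induction j with
    | zero => exact fun v => measurable_const
    | succ j ih =>
      intro v
      simp only [mem_explore_succ]
      exact (ih v).or (.exists fun u => (ih u).and (.exists fun i =>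
        measurableSet_setOfPred.1 (measurable_pi_apply (s(u, v), i) (hW j))))
  simp only [Finset.ext_iff]
  exact measurableSet_setOfPred.2 (.forall fun v => (hmem j v).iff measurable_const)

lemma Journey.of_mem_explore (hW : ∀ l j, l < j → ∀ a ∈ W j, ∀ b ∈ W l, a < b) {v : V}
    (hv : v ∈ explore W w x j) : Journey (labelGraph x) (⋃ l < j, W l) v w := by
  induction j generalizing v with
  | zero =>
    obtain rfl : v = w := by simpa [explore] using hv
    exact .refl _ _ v
  | succ j ih =>
    have hsub : (⋃ l < j, W l) ⊆ ⋃ l < j + 1, W l :=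
      biUnion_subset_biUnion_left fun l (hl : l < j) => hl.trans j.lt_succ_self
    by_cases hvj : v ∈ explore W w x j
    · exact (ih hvj).mono hsub
    obtain ⟨u, hu, i, hx⟩ := (mem_explore_succ.1 hv).resolve_left hvj
    have hlabel : x (s(u, v), i) ∈ labelGraph x s(v, u) := by
      rw [Sym2.eq_swap]
      exact mem_labelGraph.2 ⟨fun h => hvj (h ▸ hu), i, rfl⟩
    refine ((ih hu).cons hlabel hx fun a ha b hb => ?_).mono
      (union_subset (subset_biUnion_of_mem (u := W) (show j < j + 1 from j.lt_succ_self)) hsub)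
    obtain ⟨l, hl, hb⟩ := mem_iUnion₂.1 hb
    exact hW l j hl a ha b hb

variable (ν : Measure ℝ) [IsProbabilityMeasure ν]

theorem measureReal_explore_succ_eq_self_le (hW : ∀ j, MeasurableSet (W j))
    (hdisj : ∀ l < j, Disjoint (W l) (W j)) (A : Finset V) :
    (labelMeasure V r ν).real {x | explore W w x j = A ∧ explore W w x (j + 1) = A}
      ≤ ν.real (W j)ᶜ ^ (A.card * (Fintype.card V - A.card) * r) *
        (labelMeasure V r ν).real {x | explore W w x j = A} := by
  set D : Set (Sym2 V × Fin r → ℝ) := {x | explore W w x j = A}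
  have hsub : {x | explore W w x j = A ∧ explore W w x (j + 1) = A}
      ⊆ D ∩ {x | ∀ c ∈ cutLabels r A Aᶜ, x c ∉ W j} := by
    rintro x ⟨hj, hsucc⟩
    refine ⟨hj, fun c hc hx => ?_⟩
    obtain ⟨u, hu, v, hv, heq⟩ := mem_cutLabels.1 hc
    refine Finset.mem_compl.1 hv (hsucc ▸ mem_explore_succ.2 (.inr ⟨u, hj ▸ hu, c.2, ?_⟩))
    rwa [heq]
  have hcard : (cutLabels r A Aᶜ).card = A.card * (Fintype.card V - A.card) * r := by
    rw [card_cutLabels r disjoint_compl_right, Finset.card_compl]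
  have hle := pi_inter_forall_notMem_le (fun _ => ν) (measurableSet_explore_eq (w := w) hW A)
    (fun _ => hW j) (cutLabels r A Aᶜ)
    fun c hc x hx a ha => explore_update_cutLabels hdisj hx hc ha
  rw [Finset.prod_const, hcard] at hle
  calc _ ≤ (labelMeasure V r ν).real (D ∩ {x | ∀ c ∈ cutLabels r A Aᶜ, x c ∉ W j}) :=
        measureReal_mono hsub
    _ ≤ _ := by
        simpa [measureReal_def] using ENNReal.toReal_mono (by finiteness) hle

end Exploration

section Drift

variable {Ω V : Type*} [MeasurableSpace Ω] {μ : Measure Ω}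

lemma integrable_comp_of_measurableSet_eq [IsFiniteMeasure μ] {ι : Type*} [Finite ι] {X : Ω → ι}
    (hX : ∀ a, MeasurableSet {ω | X ω = a}) (f : ι → ℝ) : Integrable (fun ω => f (X ω)) μ := by
  let _ : MeasurableSpace ι := ⊤
  exact Integrable.of_finite.comp_measurable (measurable_to_countable' hX)

lemma integral_le_mul_integral_of_forall_fiber {ι : Type*} [Finite ι] {X : Ω → ι}
    (hX : ∀ a, MeasurableSet {ω | X ω = a}) {f g : Ω → ℝ} (hf : Integrable f μ)
    (hg : Integrable g μ) {c : ℝ}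
    (h : ∀ a, ∫ ω in {ω | X ω = a}, f ω ∂μ ≤ c * ∫ ω in {ω | X ω = a}, g ω ∂μ) :
    ∫ ω, f ω ∂μ ≤ c * ∫ ω, g ω ∂μ := by
  have := Fintype.ofFinite ι
  have hdisj : Pairwise (Function.onFun Disjoint fun a => {ω | X ω = a}) := fun a b hab =>
    disjoint_left.2 fun ω ha hb => hab (ha.symm.trans hb)
  have hsum : ∀ {F : Ω → ℝ}, Integrable F μ → ∫ ω, F ω ∂μ = ∑ a, ∫ ω in {ω | X ω = a}, F ω ∂μ := by
    intro F hF
    rw [← integral_iUnion_fintype hX hdisj fun a => hF.integrableOn,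
      iUnion_eq_univ_iff.2 fun ω => ⟨X ω, rfl⟩, Measure.restrict_univ]
  rw [hsum hf, hsum hg, Finset.mul_sum]
  exact Finset.sum_le_sum fun a _ => h a

lemma setIntegral_comp_card_le [IsFiniteMeasure μ] [Finite V] {X Y : Ω → Finset V}
    (hX : ∀ A, MeasurableSet {ω | X ω = A}) (hY : ∀ A, MeasurableSet {ω | Y ω = A})
    (hXY : ∀ ω, X ω ⊆ Y ω) {A : Finset V} {h : ℕ → ℝ}
    (hh : AntitoneOn h (Ici A.card)) :
    ∫ ω in {ω | X ω = A}, h (Y ω).card ∂μ ≤ h (A.card + 1) * μ.real {ω | X ω = A} +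
      (h A.card - h (A.card + 1)) * μ.real {ω | X ω = A ∧ Y ω = A} := by
  set c := h A.card - h (A.card + 1)
  have hind : Integrable ({ω | Y ω = A}.indicator fun _ => c) μ :=
    (integrable_const c).indicator (hY A)
  have hpoint : ∀ ω ∈ {ω | X ω = A},
      h (Y ω).card ≤ h (A.card + 1) + {ω | Y ω = A}.indicator (fun _ => c) ω := by
    rintro ω rfl
    by_cases heq : Y ω = X ω
    · simp [heq, c]
    · have hcard := Finset.card_lt_card ((hXY ω).ssubset_of_ne (Ne.symm heq))
      simpa [heq] using hh (Nat.le_succ _) hcard.le hcard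
  calc ∫ ω in {ω | X ω = A}, h (Y ω).card ∂μ
      ≤ ∫ ω in {ω | X ω = A}, (h (A.card + 1) + {ω | Y ω = A}.indicator (fun _ => c) ω) ∂μ :=
        setIntegral_mono_on
          (integrable_comp_of_measurableSet_eq hY fun B => h B.card).integrableOn
          ((integrable_const _).add hind).integrableOn (hX A) hpoint
    _ = _ := by
        rw [integral_add (integrable_const _) hind.integrableOn, integral_indicator (hY A),
          Measure.restrict_restrict (hY A), setIntegral_const, setIntegral_const, inter_comm]
        simp only [smul_eq_mul, mul_comm, ofPred_and]

lemma setIntegral_comp_card_le_mul [IsFiniteMeasure μ] [Finite V] {X Y : Ω → Finset V}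
    (hX : ∀ A, MeasurableSet {ω | X ω = A}) (hY : ∀ A, MeasurableSet {ω | Y ω = A})
    (hXY : ∀ ω, X ω ⊆ Y ω) {A : Finset V} {h : ℕ → ℝ} (hh : AntitoneOn h (Ici A.card)) {q c : ℝ}
    (hq : μ.real {ω | X ω = A ∧ Y ω = A} ≤ q * μ.real {ω | X ω = A})
    (hc : h (A.card + 1) + (h A.card - h (A.card + 1)) * q ≤ c * h A.card) :
    ∫ ω in {ω | X ω = A}, h (Y ω).card ∂μ ≤ c * ∫ ω in {ω | X ω = A}, h (X ω).card ∂μ := by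
  have hdrop : 0 ≤ h A.card - h (A.card + 1) :=
    sub_nonneg.2 (hh self_mem_Ici (Nat.le_succ _) (Nat.le_succ _))
  have hconst : ∫ ω in {ω | X ω = A}, h (X ω).card ∂μ = μ.real {ω | X ω = A} * h A.card := by
    rw [setIntegral_congr_fun (hX A) (g := fun _ => h A.card) fun ω (hω : X ω = A) => by
      simp only [hω], setIntegral_const, smul_eq_mul]
  calc _ ≤ h (A.card + 1) * μ.real {ω | X ω = A} +
        (h A.card - h (A.card + 1)) * μ.real {ω | X ω = A ∧ Y ω = A} :=
      setIntegral_comp_card_le hX hY hXY hh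
    _ ≤ (h (A.card + 1) + (h A.card - h (A.card + 1)) * q) * μ.real {ω | X ω = A} := by
      rw [add_mul, mul_assoc]
      gcongr
    _ ≤ c * h A.card * μ.real {ω | X ω = A} := by gcongr
    _ = _ := by rw [hconst]; ring

end Drift

section Potential

/-- The potential `(n - s) / (s - 1 + δ)` of a set of `s` explored vertices out of `n`, which
decreases by a nearly constant factor per unit of time. The summand `δ` keeps it finite
at `s = 1`. -/
def potential (n δ s : ℝ) : ℝ := (n - s) / (s - 1 + δ)

variable {n δ : ℝ}

lemma potential_sub_potential_succ (hδ : 0 < δ) {a : ℝ} (ha : 1 ≤ a) :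
    potential n δ a - potential n δ (a + 1) = (n - 1 + δ) / ((a - 1 + δ) * (a + δ)) := by
  have h1 : a - 1 + δ ≠ 0 := by linarith
  have h2 : a + δ ≠ 0 := by linarith
  rw [potential, potential, show a + 1 - 1 + δ = a + δ by ring]
  field_simp
  ring

lemma antitoneOn_potential (hδ : 0 < δ) (hn : 1 ≤ n) : AntitoneOn (potential n δ) (Ici 1) := by
  intro a (ha : 1 ≤ a) b (hb : 1 ≤ b) hab
  rw [potential, potential, div_le_div_iff₀ (by linarith) (by linarith)]
  nlinarith [mul_nonneg (sub_nonneg.2 hab) (show 0 ≤ n - 1 + δ by linarith)]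

lemma mul_one_sub_le_one_sub_one_sub_pow {τ : ℝ} (hτ1 : τ ≤ 1) {m : ℕ}
    (hm : 0 ≤ m * τ) (hmδ : m * τ ≤ δ) : m * τ * (1 - δ) ≤ 1 - (1 - τ) ^ m := by
  have hexp : (1 - τ) ^ m ≤ Real.exp (-(m * τ)) := by
    rw [neg_mul_eq_mul_neg, Real.exp_nat_mul]
    exact pow_le_pow_left₀ (by linarith) (Real.one_sub_le_exp_neg τ) m
  have hinv : Real.exp (-(m * τ)) ≤ 1 / (1 + m * τ) := by
    rw [Real.exp_neg, ← one_div]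
    gcongr
    linarith [Real.add_one_le_exp (m * τ)]
  have hdiv : 1 / (1 + m * τ) ≤ 1 - m * τ * (1 - δ) := by
    rw [div_le_iff₀ (by linarith)]
    nlinarith [mul_nonneg hm (sub_nonneg.2 hmδ), mul_nonneg (mul_nonneg hm hm) (hm.trans hmδ)]
  linarith

lemma potential_drift {n a r : ℕ} {τ : ℝ} (hδ : 0 < δ) (hδ1 : δ ≤ 1) (hn : 1 ≤ n * δ) (hτ : 0 ≤ τ)
    (hτ1 : τ ≤ 1) (hrτ : r * n ^ 2 * τ ≤ δ) (ha : 1 ≤ a) (han : a ≤ n) :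
    potential n δ (a + 1) + (potential n δ a - potential n δ (a + 1)) *
      (1 - τ) ^ (a * (n - a) * r) ≤ (1 - (1 - 3 * δ) * (r * n * τ)) * potential n δ a := by
  have ha' : (1 : ℝ) ≤ a := mod_cast ha
  have han' : (a : ℝ) ≤ n := mod_cast han
  set d : ℝ := n - a
  have : 0 ≤ d := sub_nonneg.2 han'
  have hm : ((a * (n - a) * r : ℕ) : ℝ) = a * d * r := by push_cast [Nat.cast_sub han]; rfl
  have hhit : a * d * r * τ * (1 - δ) ≤ 1 - (1 - τ) ^ (a * (n - a) * r) := by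
    rw [← hm]
    refine mul_one_sub_le_one_sub_one_sub_pow hτ1 (by positivity) (le_trans ?_ hrτ)
    rw [hm, show (r : ℝ) * n ^ 2 = n * n * r by ring]
    gcongr
    exact sub_le_self _ (by positivity)
  have hfactor : (1 - 3 * δ) * n * (a + δ) ≤ (n - 1 + δ) * (a * (1 - δ)) := by
    have h1 : n * (1 - δ) ≤ n - 1 + δ := by linarith
    have h2 : (1 - δ) * (a + δ) ≤ a := by nlinarith
    have h3 : 1 - 3 * δ ≤ (1 - δ) ^ 3 := by nlinarith [sq_nonneg δ, pow_pos hδ 3]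
    calc (1 - 3 * δ) * n * (a + δ) ≤ (1 - δ) ^ 3 * n * (a + δ) := by gcongr
      _ = (n * (1 - δ)) * ((1 - δ) * (a + δ) * (1 - δ)) := by ring
      _ ≤ _ := by
        have := sub_nonneg.2 hδ1
        gcongr
        linarith
  have hdrift : (1 - 3 * δ) * (r * n * τ) * potential n δ a ≤
      (potential n δ a - potential n δ (a + 1)) * (1 - (1 - τ) ^ (a * (n - a) * r)) := by
    have h1 : 0 < a - 1 + δ := by linarith
    have : 0 < a + δ := by linarith
    have h3 : 0 ≤ n - 1 + δ := by linarith
    calc _ = (1 - 3 * δ) * (r * n * τ) * (d / (a - 1 + δ)) := rfl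
      _ = ((1 - 3 * δ) * n * (a + δ)) * (d * r * τ) / ((a - 1 + δ) * (a + δ)) := by field_simp
      _ ≤ ((n - 1 + δ) * (a * (1 - δ))) * (d * r * τ) / ((a - 1 + δ) * (a + δ)) := by gcongr
      _ = (n - 1 + δ) / ((a - 1 + δ) * (a + δ)) * (a * d * r * τ * (1 - δ)) := by ring
      _ ≤ _ := by rw [potential_sub_potential_succ hδ ha']; gcongr
  linarith

lemma potential_nonneg (hδ : 0 < δ) {s : ℝ} (hs : 1 ≤ s) (hsn : s ≤ n) : 0 ≤ potential n δ s :=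
  div_nonneg (by linarith) (by linarith)

lemma le_potential {s : ℝ} (hδ : 0 < δ) (hδ1 : δ ≤ 1) (hs : 1 ≤ s) (h : s ≤ (1 - δ) * n) :
    δ ≤ potential n δ s := by
  have hn : 0 < n := pos_of_mul_pos_right (one_pos.trans_le (hs.trans h)) (by linarith)
  have hsn : s - 1 + δ ≤ n := by nlinarith
  rw [potential, le_div_iff₀ (by linarith)]
  nlinarith

end Potential

section BackwardGrowth

variable {V : Type*} [Fintype V] [DecidableEq V] {r : ℕ} {w : V} {δ t τ : ℝ} {j : ℕ}

/-- The `l`-th time window, of length `τ`, counted backwards from time `t`. -/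
def backWindow (t τ : ℝ) (l : ℕ) : Set ℝ := Ioc (t - (l + 1) * τ) (t - l * τ)

lemma lt_of_mem_backWindow (hτ : 0 ≤ τ) {l : ℕ} (hlj : l < j) {a b : ℝ}
    (ha : a ∈ backWindow t τ j) (hb : b ∈ backWindow t τ l) : a < b := by
  have hlj' : (l : ℝ) + 1 ≤ j := mod_cast hlj
  exact ha.2.trans_lt (lt_of_le_of_lt (by gcongr) hb.1)

lemma integral_potential_explore_succ_le (hδ : 0 < δ) (hδ1 : δ ≤ 1)
    (hn : 1 ≤ Fintype.card V * δ) (hτ : 0 ≤ τ) (ht : t ≤ 1) (hj : (j + 1) * τ ≤ t)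
    (hrτ : r * (Fintype.card V) ^ 2 * τ ≤ δ) :
    ∫ x, potential (Fintype.card V) δ (explore (backWindow t τ) w x (j + 1)).card
        ∂labelMeasure V r unif01 ≤
      Real.exp (-((1 - 3 * δ) * (r * Fintype.card V * τ))) *
        ∫ x, potential (Fintype.card V) δ (explore (backWindow t τ) w x j).card
          ∂labelMeasure V r unif01 := by
  set n := Fintype.card V
  have hmeas : ∀ l, MeasurableSet (backWindow t τ l) := fun _ => measurableSet_Ioc
  have hX : ∀ l A, MeasurableSet {x : Sym2 V × Fin r → ℝ | explore (backWindow t τ) w x l = A} :=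
    fun l => measurableSet_explore_eq hmeas
  have hint : ∀ l, Integrable (fun x => potential n δ (explore (backWindow t τ) w x l).card)
      (labelMeasure V r unif01) := fun l =>
    integrable_comp_of_measurableSet_eq (hX l) fun A => potential n δ A.card
  have hn1 : (1 : ℝ) ≤ n := hn.trans (mul_le_of_le_one_right n.cast_nonneg hδ1)
  have hτ1 : τ ≤ 1 := by nlinarith [mul_nonneg (j.cast_nonneg (α := ℝ)) hτ]
  refine integral_le_mul_integral_of_forall_fiber (hX j) (hint _) (hint _) fun A => ?_
  rcases A.eq_empty_or_nonempty with rfl | hA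
  · simp [explore_nonempty.ne_empty]
  have hwindow : unif01.real (backWindow t τ j)ᶜ = 1 - τ := by
    rw [backWindow, unif01_real_compl_Ioc (by linarith) (by linarith) (by nlinarith)]
    ring
  have hstay := measureReal_explore_succ_eq_self_le (w := w) (r := r) (j := j) unif01 hmeas
    (fun l hl => disjoint_right.2 fun a ha hb => (lt_of_mem_backWindow hτ hl ha hb).false) A
  rw [hwindow] at hstay
  refine setIntegral_comp_card_le_mul (hX j) (hX (j + 1)) (fun x => explore_mono j.le_succ)
    (h := fun s => potential n δ s) (fun a ha b hb hab => ?_) hstay ?_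
  · have hIci : ∀ s ∈ Ici A.card, (s : ℝ) ∈ Ici 1 := fun s hs =>
      mem_Ici.2 (mod_cast hA.card_pos.trans_le hs)
    exact antitoneOn_potential hδ hn1 (hIci a ha) (hIci b hb) (mod_cast hab)
  · push_cast
    refine (potential_drift hδ hδ1 hn hτ hτ1 hrτ hA.card_pos A.card_le_univ).trans ?_
    gcongr
    · exact potential_nonneg hδ (mod_cast hA.card_pos) (mod_cast A.card_le_univ)
    · exact Real.one_sub_le_exp_neg _

lemma integral_potential_explore_le (hδ : 0 < δ) (hδ1 : δ ≤ 1) (hn : 1 ≤ Fintype.card V * δ)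
    (hτ : 0 ≤ τ) (ht : t ≤ 1) (hj : j * τ ≤ t) (hrτ : r * (Fintype.card V) ^ 2 * τ ≤ δ) :
    ∫ x, potential (Fintype.card V) δ (explore (backWindow t τ) w x j).card
        ∂labelMeasure V r unif01 ≤
      Real.exp (-((1 - 3 * δ) * (r * Fintype.card V * (j * τ)))) *
        ((Fintype.card V - 1) / δ) := by
  induction j with
  | zero => simp [explore, potential]
  | succ j ih =>
    push_cast at hj ⊢
    calc _ ≤ _ := integral_potential_explore_succ_le hδ hδ1 hn hτ ht hj hrτ
      _ ≤ _ := mul_le_mul_of_nonneg_left (ih (by linarith)) (Real.exp_nonneg _)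
      _ = _ := by rw [← mul_assoc, ← Real.exp_add]; ring_nf

lemma explore_subset_inBall (hτ : 0 ≤ τ) (x : Sym2 V × Fin r → ℝ) :
    ↑(explore (backWindow t τ) w x j) ⊆ inBall (labelGraph x) w t := fun v hv =>
  (Journey.of_mem_explore (fun _ _ hlj _ ha _ hb => lt_of_mem_backWindow hτ hlj ha hb) hv).mono <|
    iUnion₂_subset fun l _ _ ha => ha.2.trans (sub_le_self t (by positivity))

theorem measureReal_ncard_inBall_le (hδ : 0 < δ) (hδ1 : δ ≤ 1) (hn : 1 ≤ Fintype.card V * δ)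
    (ht0 : 0 ≤ t) (ht : t ≤ 1) (w : V) :
    (labelMeasure V r unif01).real
        {x | ((inBall (labelGraph x) w t).ncard : ℝ) ≤ (1 - δ) * Fintype.card V} ≤
      Fintype.card V / δ ^ 2 * Real.exp (-((1 - 3 * δ) * (r * Fintype.card V * t))) := by
  set n := Fintype.card V
  obtain ⟨N, hN⟩ := exists_nat_gt (r * n ^ 2 * t / δ)
  have hN0 : (0 : ℝ) < N := lt_of_le_of_lt (by positivity) hN
  set τ := t / N
  have hτ : 0 ≤ τ := by positivity
  have hNτ : N * τ = t := mul_div_cancel₀ t hN0.ne'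
  have hrτ : r * n ^ 2 * τ ≤ δ := by
    rw [← mul_div_assoc, div_le_iff₀ hN0, ← div_le_iff₀' hδ]
    exact hN.le
  have hsub : {x : Sym2 V × Fin r → ℝ | ((inBall (labelGraph x) w t).ncard : ℝ) ≤ (1 - δ) * n} ⊆
      {x | δ ≤ potential n δ (explore (backWindow t τ) w x N).card} := fun x hx => by
    refine le_potential hδ hδ1 (mod_cast explore_nonempty.card_pos) (le_trans ?_ hx)
    rw [← ncard_coe_finset]
    exact mod_cast ncard_le_ncard (explore_subset_inBall hτ x) (toFinite _)
  have hmarkov : δ * (labelMeasure V r unif01).real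
        {x | δ ≤ potential n δ (explore (backWindow t τ) w x N).card} ≤
      Real.exp (-((1 - 3 * δ) * (r * n * (N * τ)))) * ((n - 1) / δ) :=
    (mul_meas_ge_le_integral_of_nonneg (ae_of_all _ fun x => potential_nonneg hδ
      (mod_cast explore_nonempty.card_pos) (mod_cast Finset.card_le_univ _))
      (integrable_comp_of_measurableSet_eq (measurableSet_explore_eq fun _ => measurableSet_Ioc)
        fun A => potential n δ A.card) δ).trans
      (integral_potential_explore_le hδ hδ1 hn hτ ht hNτ.le hrτ)
  rw [hNτ] at hmarkov
  calc _ ≤ _ := measureReal_mono hsub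
    _ ≤ Real.exp (-((1 - 3 * δ) * (r * n * t))) * ((n - 1) / δ) / δ := by
      rwa [le_div_iff₀' hδ]
    _ ≤ Real.exp (-((1 - 3 * δ) * (r * n * t))) * (n / δ) / δ := by gcongr; linarith
    _ = _ := by field_simp

end BackwardGrowth

section UpperBound

variable {V : Type*} [Fintype V] [DecidableEq V] {r : ℕ} {δ t : ℝ}

lemma measureReal_forall_cutLabels_lt_le (ht0 : 0 ≤ t) (ht : t ≤ 1) {S T : Finset V}
    (hdisj : Disjoint S T) (hcard : T.card = S.card) :
    (labelMeasure V r unif01).real {x | ∀ c ∈ cutLabels r S (S ∪ T)ᶜ, x c ∈ Ioi t} ≤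
      Real.exp (-(r * (Fintype.card V - 2 * S.card) * t)) ^ S.card := by
  have hle : 2 * S.card ≤ Fintype.card V := by
    have := (S ∪ T).card_le_univ
    rwa [Finset.card_union_of_disjoint hdisj, hcard, ← two_mul] at this
  have hcut : (cutLabels r S (S ∪ T)ᶜ).card = S.card * (Fintype.card V - 2 * S.card) * r := by
    rw [card_cutLabels r (disjoint_compl_right.mono_left Finset.subset_union_left),
      Finset.card_compl, Finset.card_union_of_disjoint hdisj, hcard, two_mul]
  rw [pi_real_forall_mem, hcut, unif01_real_Ioi ht0 ht, ← Real.exp_nat_mul]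
  calc (1 - t) ^ (S.card * (Fintype.card V - 2 * S.card) * r)
      ≤ Real.exp (-t) ^ (S.card * (Fintype.card V - 2 * S.card) * r) :=
        pow_le_pow_left₀ (by linarith) (Real.one_sub_le_exp_neg t) _
    _ = _ := by rw [← Real.exp_nat_mul]; push_cast [Nat.cast_sub hle]; ring_nf

theorem measureReal_exists_card_eq_ncard_ball_lt_le (ht0 : 0 ≤ t) (ht : t ≤ 1) {s : ℕ}
    (hs : 2 * s ≤ Fintype.card V) :
    (labelMeasure V r unif01).real
        {x | ∃ S : Finset V, S.card = s ∧ (ball (labelGraph x) ↑S t).ncard < 2 * s} ≤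
      (Fintype.card V ^ 2 * Real.exp (-(r * (Fintype.card V - 2 * s) * t))) ^ s := by
  set n := Fintype.card V
  set pairs := ((Finset.univ.powersetCard s ×ˢ Finset.univ.powersetCard s :
    Finset (Finset V × Finset V))).filter fun p => Disjoint p.1 p.2
  have hpairs : (pairs.card : ℝ) ≤ (n ^ 2) ^ s := by
    calc (pairs.card : ℝ) ≤ (n.choose s * n.choose s : ℕ) := by
          refine mod_cast (Finset.card_filter_le _ _).trans_eq ?_
          simp [n]
      _ ≤ (n ^ s * n ^ s : ℕ) := mod_cast Nat.mul_le_mul (n.choose_le_pow s) (n.choose_le_pow s)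
      _ = _ := by push_cast; ring
  have hsub : {x : Sym2 V × Fin r → ℝ |
        ∃ S : Finset V, S.card = s ∧ (ball (labelGraph x) ↑S t).ncard < 2 * s} ⊆
      ⋃ p ∈ pairs, {x | ∀ c ∈ cutLabels r p.1 (p.1 ∪ p.2)ᶜ, x c ∈ Ioi t} := by
    rintro x ⟨S, rfl, hS⟩
    obtain ⟨T, hdisj, hcard, hlt⟩ := exists_finset_card_eq_disjoint_of_card_ball_lt hs hS
    refine mem_iUnion₂.2 ⟨(S, T), by simp [pairs, hdisj, hcard], fun c hc => ?_⟩
    obtain ⟨u, hu, v, hv, heq⟩ := mem_cutLabels.1 hc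
    have hvST := Finset.mem_compl.1 hv
    refine hlt u hu v (mod_cast hvST) _ (mem_labelGraph.2 ⟨?_, c.2, by rw [heq]⟩)
    rintro rfl
    exact hvST (Finset.mem_union_left _ hu)
  calc _ ≤ _ := measureReal_mono hsub (measure_ne_top _ _)
    _ ≤ ∑ p ∈ pairs, _ := measureReal_biUnion_finset_le _ _
    _ ≤ ∑ _ ∈ pairs, Real.exp (-(r * (n - 2 * s) * t)) ^ s := by
      refine Finset.sum_le_sum fun _ hp => ?_
      obtain ⟨⟨rfl, hcard⟩, hdisj⟩ := by simpa [pairs] using hp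
      exact measureReal_forall_cutLabels_lt_le ht0 ht hdisj hcard
    _ ≤ _ := by
      rw [Finset.sum_const, nsmul_eq_mul, mul_pow]
      gcongr

theorem measureReal_exists_card_le_ncard_ball_lt_le (hδ : δ ≤ 1 / 2) (ht0 : 0 ≤ t) (ht : t ≤ 1)
    (hq : Fintype.card V ^ 2 * Real.exp (-((1 - 2 * δ) * (r * Fintype.card V * t))) ≤ 1 / 2) :
    (labelMeasure V r unif01).real {x | ∃ S : Finset V, S.Nonempty ∧
        S.card ≤ δ * Fintype.card V ∧ (ball (labelGraph x) ↑S t).ncard < 2 * S.card} ≤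
      2 * (Fintype.card V ^ 2 * Real.exp (-((1 - 2 * δ) * (r * Fintype.card V * t)))) := by
  set n := Fintype.card V
  set q := n ^ 2 * Real.exp (-((1 - 2 * δ) * (r * n * t)))
  have hq0 : 0 ≤ q := by positivity
  set sizes := (Finset.Ico 1 (n + 1)).filter fun s : ℕ => (s : ℝ) ≤ δ * n
  have hsub : {x : Sym2 V × Fin r → ℝ | ∃ S : Finset V, S.Nonempty ∧ S.card ≤ δ * n ∧
        (ball (labelGraph x) ↑S t).ncard < 2 * S.card} ⊆
      ⋃ s ∈ sizes, {x | ∃ S : Finset V, S.card = s ∧ (ball (labelGraph x) ↑S t).ncard < 2 * s} := by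
    rintro x ⟨S, hne, hS, hball⟩
    exact mem_iUnion₂.2 ⟨S.card,
      by simp [sizes, hS, hne, Nat.lt_succ_of_le S.card_le_univ, n], S, rfl, hball⟩
  have hsize : ∀ s ∈ sizes, (labelMeasure V r unif01).real {x | ∃ S : Finset V, S.card = s ∧
      (ball (labelGraph x) ↑S t).ncard < 2 * s} ≤ q ^ s := by
    intro s hs
    have hsδ : (s : ℝ) ≤ δ * n := (Finset.mem_filter.1 hs).2
    have h2s : 2 * (s : ℝ) ≤ n := by nlinarith [n.cast_nonneg (α := ℝ)]
    refine (measureReal_exists_card_eq_ncard_ball_lt_le ht0 ht (mod_cast h2s)).trans ?_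
    have hexp : (1 - 2 * δ) * (r * n * t) ≤ r * (n - 2 * s) * t := by
      rw [show (1 - 2 * δ) * (r * n * t) = r * (n - 2 * (δ * n)) * t by ring]
      gcongr
    exact pow_le_pow_left₀ (by positivity)
      (mul_le_mul_of_nonneg_left (Real.exp_le_exp.2 (neg_le_neg hexp)) (by positivity)) s
  calc _ ≤ _ := measureReal_mono hsub (measure_ne_top _ _)
    _ ≤ ∑ s ∈ sizes, _ := measureReal_biUnion_finset_le _ _
    _ ≤ ∑ s ∈ sizes, q ^ s := Finset.sum_le_sum hsize
    _ ≤ ∑ s ∈ Finset.Ico 1 (n + 1), q ^ s :=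
      Finset.sum_le_sum_of_subset_of_nonneg (Finset.filter_subset _ _) fun s _ _ => by positivity
    _ ≤ q ^ 1 / (1 - q) := geom_sum_Ico_le_of_lt_one hq0 (by linarith)
    _ ≤ 2 * q := by rw [div_le_iff₀ (by linarith)]; nlinarith

theorem measureReal_not_doubleAll_le_le (hδ : 0 < δ) (hδ2 : δ ≤ 1 / 2)
    (hn : 1 ≤ Fintype.card V * δ) (ht0 : 0 ≤ t) (ht : t ≤ 1)
    (hq : Fintype.card V ^ 2 * Real.exp (-((1 - 3 * δ) * (r * Fintype.card V * t))) ≤ 1 / 2) :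
    (labelMeasure V r unif01).real {x | ¬ doubleAll (labelGraph x) ≤ ENNReal.ofReal t} ≤
      (2 + 1 / δ ^ 2) *
        (Fintype.card V ^ 2 * Real.exp (-((1 - 3 * δ) * (r * Fintype.card V * t)))) := by
  set n := Fintype.card V
  set μ := labelMeasure V r unif01
  set small := {x : Sym2 V × Fin r → ℝ | ∃ S : Finset V, S.Nonempty ∧ S.card ≤ δ * n ∧
    (ball (labelGraph x) ↑S t).ncard < 2 * S.card}
  set slow : V → Set (Sym2 V × Fin r → ℝ) := fun w =>
    {x | ((inBall (labelGraph x) w t).ncard : ℝ) ≤ (1 - δ) * n}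
  have hsub : {x | ¬ doubleAll (labelGraph x) ≤ ENNReal.ofReal t} ⊆ small ∪ ⋃ w, slow w := by
    refine fun x hx => by_contra fun hgood => hx (doubleAll_le_ofReal ht0 fun S hS hSn => ?_)
    simp only [mem_union, mem_iUnion, not_or, not_exists] at hgood
    lift S to Finset V using toFinite S
    rw [ncard_coe_finset] at hSn ⊢
    by_cases hcard : (S.card : ℝ) ≤ δ * n
    · exact not_lt.1 fun hball => hgood.1 ⟨S, by simpa using hS, hcard, hball⟩
    · refine (two_mul_ncard_le_ncard_ball_of_inBall (by rwa [ncard_coe_finset])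
        fun w => ?_).trans' ?_
      · have hw : (1 - δ) * n < (inBall (labelGraph x) w t).ncard := not_le.1 (hgood.2 w)
        rw [ncard_coe_finset]
        have : (n : ℝ) < S.card + (inBall (labelGraph x) w t).ncard := by linarith
        exact_mod_cast this
      · rw [ncard_coe_finset]
  have hexp : Real.exp (-((1 - 2 * δ) * (r * n * t))) ≤
      Real.exp (-((1 - 3 * δ) * (r * n * t))) := by
    gcongr
    linarith
  calc _ ≤ μ.real (small ∪ ⋃ w, slow w) := measureReal_mono hsub (measure_ne_top _ _)
    _ ≤ μ.real small + ∑ w, μ.real (slow w) :=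
      (measureReal_union_le _ _).trans (by gcongr; exact measureReal_iUnion_fintype_le _)
    _ ≤ 2 * (n ^ 2 * Real.exp (-((1 - 3 * δ) * (r * n * t)))) +
        ∑ w : V, n / δ ^ 2 * Real.exp (-((1 - 3 * δ) * (r * n * t))) := by
      gcongr with w
      · refine (measureReal_exists_card_le_ncard_ball_lt_le hδ2 ht0 ht (hq.trans' ?_)).trans ?_ <;>
          gcongr
      · exact measureReal_ncard_inBall_le hδ (by linarith) hn ht0 ht w
    _ = _ := by rw [Finset.sum_const, nsmul_eq_mul, Finset.card_univ]; ring

lemma tendsto_mul_log_div (a b : ℝ) :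
    Tendsto (fun n : ℕ => a * Real.log n / (b * n)) atTop (𝓝 0) := by
  have h := (Real.isLittleO_log_id_atTop.tendsto_div_nhds_zero.comp
    tendsto_natCast_atTop_atTop).const_mul (a / b)
  simpa only [mul_zero, Function.comp_apply, id_eq, div_mul_div_comm] using h

lemma tendsto_natCast_rpow_neg {β : ℝ} (hβ : 0 < β) :
    Tendsto (fun n : ℕ => (n : ℝ) ^ (-β)) atTop (𝓝 0) :=
  (tendsto_rpow_neg_atTop hβ).comp tendsto_natCast_atTop_atTop

lemma natCast_sq_mul_exp_le_rpow {α : ℝ} (hα : 0 ≤ α) (hα1 : α ≤ 1) {n : ℕ} (hn : 1 ≤ n) :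
    (n : ℝ) ^ 2 * Real.exp (-((1 - α / 4) * ((2 + α) * Real.log n))) ≤ (n : ℝ) ^ (-(α / 4)) := by
  have hn0 : (0 : ℝ) < n := mod_cast hn
  have hlog : 0 ≤ Real.log n := Real.log_natCast_nonneg n
  rw [Real.rpow_def_of_pos hn0, ← Real.rpow_natCast, Real.rpow_def_of_pos hn0, ← Real.exp_add]
  gcongr
  push_cast
  nlinarith [mul_nonneg hlog (mul_nonneg hα (sub_nonneg.2 hα1))]

theorem tendsto_measureReal_not_doubleAll_le (hr : 0 < r) {α : ℝ} (hα : 0 < α) (hα1 : α ≤ 1) :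
    Tendsto (fun n : ℕ => (labelMeasure (Fin n) r unif01).real {x | ¬ doubleAll (labelGraph x) ≤
      ENNReal.ofReal ((2 + α) * Real.log n / (r * n))}) atTop (𝓝 0) := by
  set δ := α / 12 with hδ
  have hδ0 : 0 < δ := by positivity
  have hrpow := tendsto_natCast_rpow_neg (by positivity : 0 < α / 4)
  refine squeeze_zero' (.of_forall fun _ => measureReal_nonneg) ?_
    (by simpa only [mul_zero] using hrpow.const_mul (2 + 1 / δ ^ 2))
  filter_upwards [eventually_ge_atTop 1, tendsto_natCast_atTop_atTop.eventually_ge_atTop (1 / δ),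
    (tendsto_mul_log_div (2 + α) r).eventually_le_const one_pos,
    hrpow.eventually_le_const one_half_pos] with n hn1 hnδ ht1 hhalf
  set t := (2 + α) * Real.log n / (r * n)
  have ht0 : 0 ≤ t := by have := Real.log_natCast_nonneg n; positivity
  have hexp : (n : ℝ) ^ 2 * Real.exp (-((1 - 3 * δ) * (r * n * t))) ≤ (n : ℝ) ^ (-(α / 4)) := by
    rw [mul_div_cancel₀ _ (by positivity), show 1 - 3 * δ = 1 - α / 4 by rw [hδ]; ring]
    exact natCast_sq_mul_exp_le_rpow hα.le hα1 hn1
  have hbound := measureReal_not_doubleAll_le_le (V := Fin n) (r := r) hδ0 (by linarith)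
    (by rwa [Fintype.card_fin, ← div_le_iff₀ hδ0]) ht0 ht1
    (by rw [Fintype.card_fin]; exact hexp.trans hhalf)
  rw [Fintype.card_fin] at hbound
  exact hbound.trans (by gcongr)

end UpperBound

section QuietVertices

variable {V : Type*} [Fintype V] [DecidableEq V] {r : ℕ} {I : Set ℝ} {w : V}

/-- The event that the edges incident to `w` carry no labels in `I`. -/
def quiet (r : ℕ) (I : Set ℝ) (w : V) : Set (Sym2 V × Fin r → ℝ) :=
  {x | ∀ c ∈ cutLabels r {w} {w}ᶜ, x c ∈ Iᶜ}

lemma mem_quiet {x : Sym2 V × Fin r → ℝ} :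
    x ∈ quiet r I w ↔ ∀ v, v ≠ w → ∀ i, x (s(v, w), i) ∉ I := by
  refine ⟨fun h v hv i => h _ (mem_cutLabels.2 ⟨w, by simp, v, by simpa, Sym2.eq_swap⟩), ?_⟩
  rintro h ⟨e, i⟩ hc
  obtain ⟨u, hu, v, hv, rfl⟩ := mem_cutLabels.1 hc
  obtain rfl := Finset.mem_singleton.1 hu
  rw [Sym2.eq_swap]
  exact h v (by simpa using hv) i

lemma card_cutLabels_compl_singleton (r : ℕ) (w : V) :
    (cutLabels r {w} {w}ᶜ).card = (Fintype.card V - 1) * r := by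
  rw [card_cutLabels r disjoint_compl_right, Finset.card_compl, Finset.card_singleton, one_mul]

lemma measurableSet_quiet (hI : MeasurableSet I) : MeasurableSet (quiet r I w) :=
  measurableSet_forall_mem _ fun _ => hI.compl

variable (ν : Measure ℝ) [IsProbabilityMeasure ν]

lemma measureReal_quiet : (labelMeasure V r ν).real (quiet r I w) =
    ν.real Iᶜ ^ ((Fintype.card V - 1) * r) := by
  rw [quiet, pi_real_forall_mem, card_cutLabels_compl_singleton]

lemma measureReal_quiet_inter_quiet_le {w' : V} (hne : w ≠ w') :
    (labelMeasure V r ν).real (quiet r I w ∩ quiet r I w') ≤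
      ν.real Iᶜ ^ ((Fintype.card V - 1) * r + (Fintype.card V - 2) * r) := by
  set F := cutLabels r {w'} ({w, w'}ᶜ : Finset V)
  have hsub : quiet r I w ∩ quiet r I w' ⊆ {x | ∀ c ∈ cutLabels r {w} {w}ᶜ ∪ F, x c ∈ Iᶜ} := by
    rintro x ⟨hx, hx'⟩ c hc
    refine (Finset.mem_union.1 hc).elim (hx c) fun hcF => hx' c ?_
    obtain ⟨u, hu, v, hv, heq⟩ := mem_cutLabels.1 hcF
    exact mem_cutLabels.2 ⟨u, hu, v, by simp_all, heq⟩
  have hdisj : Disjoint (cutLabels r {w} {w}ᶜ) F := by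
    refine Finset.disjoint_left.2 fun c hc hcF => ?_
    obtain ⟨u, hu, v, _, heq⟩ := mem_cutLabels.1 hc
    obtain ⟨u', hu', v', hv', heq'⟩ := mem_cutLabels.1 hcF
    have := Sym2.eq_iff.1 (heq.trans heq'.symm)
    simp only [Finset.mem_singleton, Finset.mem_compl, Finset.mem_insert, not_or] at hu hu' hv'
    grind
  have hF : F.card = (Fintype.card V - 2) * r := by
    rw [card_cutLabels r (disjoint_compl_right.mono_left (by simp)), Finset.card_compl,
      Finset.card_pair hne, Finset.card_singleton, one_mul]
  calc _ ≤ _ := measureReal_mono hsub (measure_ne_top _ _)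
    _ = _ := by rw [pi_real_forall_mem, Finset.card_union_of_disjoint hdisj,
      card_cutLabels_compl_singleton, hF]

end QuietVertices

section IncreasingWalks

variable {V : Type*} {r m : ℕ} {B I : Set ℝ} {w : V} {x : Sym2 V × Fin r → ℝ}

/-- The vertices of the walk that starts at the vertices listed in `p` and ends in `w`. -/
def walkVertex (p : Fin m → V × Fin r) (w : V) : Fin (m + 1) → V :=
  Fin.snoc (α := fun _ => V) (fun i => (p i).1) w

/-- The label used by the `i`-th step of the walk `p` into `w`: the second components of `p`
select one of the `r` labels of each edge crossed. -/
def walkLabel (p : Fin m → V × Fin r) (w : V) (i : Fin m) : Sym2 V × Fin r :=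
  (s(walkVertex p w i.castSucc, walkVertex p w i.succ), (p i).2)

/-- The event that the walk `p` into `w` visits `w` only at its end and uses strictly increasing
labels that lie in `B`. -/
def increasingWalk (B : Set ℝ) (w : V) (p : Fin m → V × Fin r) : Set (Sym2 V × Fin r → ℝ) :=
  {x | (∀ i, (p i).1 ≠ w) ∧ (StrictMono fun i => x (walkLabel p w i)) ∧
    ∀ i, x (walkLabel p w i) ∈ B}

lemma injective_walkLabel {p : Fin m → V × Fin r} (h : x ∈ increasingWalk B w p) :
    Function.Injective (walkLabel p w) :=
  Function.Injective.of_comp (f := x) h.2.1.injective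

lemma walkLabel_eq_of_mem {p : Fin m → V × Fin r} (hp : ∀ i, (p i).1 ≠ w) {i j : Fin m}
    (hi : w ∈ (walkLabel p w i).1) (hj : w ∈ (walkLabel p w j).1) : i = j := by
  have hlast : ∀ i, w ∈ (walkLabel p w i).1 → i.succ = Fin.last m := by
    intro i hi
    by_contra hne
    obtain ⟨k, hk⟩ := Fin.exists_castSucc_eq.2 hne
    rcases Sym2.mem_iff.1 hi with h | h
    · exact hp i (by simpa [walkVertex] using h.symm)
    · exact hp k (by simpa [walkVertex, ← hk] using h.symm)
  exact Fin.succ_injective m ((hlast i hi).trans (hlast j hj).symm)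

lemma exists_increasingWalk_of_mem_inBall [Fintype V] [DecidableEq V] {t : ℝ} {u : V}
    (h : u ∈ inBall (labelGraph x) w t) :
    ∃ m < Fintype.card (Sym2 V × Fin r) + 1, ∃ p : Fin m → V × Fin r,
      walkVertex p w 0 = u ∧ x ∈ increasingWalk (Iic t) w p := by
  obtain ⟨k, f, ts, h0, hk, hfirst, hlabel, hlt⟩ := Journey.exists_first_visit h
  choose idx hidx using fun i : Fin k => (mem_labelGraph.1 (hlabel i i.2).1).2
  set p : Fin k → V × Fin r := fun i => (f i, idx i)
  have hvertex : ∀ i, walkVertex p w i = f i := fun i => by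
    cases i using Fin.lastCases <;> simp [walkVertex, p, hk]
  have hts : ∀ i, x (walkLabel p w i) = ts i := fun i => by
    rw [← hidx i, walkLabel, hvertex, hvertex]
    rfl
  have hp : x ∈ increasingWalk (Iic t) w p := by
    refine ⟨fun i => hfirst i i.2, fun i j hij => ?_, fun i => ?_⟩
    · simpa only [hts] using hlt i j hij j.2
    · rw [hts]
      exact (hlabel i i.2).2
  have hcard := Fintype.card_le_of_injective _ (injective_walkLabel hp)
  rw [Fintype.card_fin] at hcard
  exact ⟨k, Nat.lt_succ_of_le hcard, p, (hvertex 0).trans h0, hp⟩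

variable [Fintype V] [DecidableEq V]

open scoped Classical in
lemma ncard_inBall_le_card_increasingWalk (t : ℝ) : (inBall (labelGraph x) w t).ncard ≤
    (Finset.univ.filter fun p : Σ m : Fin (Fintype.card (Sym2 V × Fin r) + 1),
      Fin m → V × Fin r => x ∈ increasingWalk (Iic t) w p.2).card := by
  rw [← ncard_coe_finset]
  refine (ncard_le_ncard (fun u hu => ?_) (toFinite _)).trans
    (ncard_image_le (f := fun p => walkVertex p.2 w 0) (toFinite _))
  obtain ⟨m, hm, p, rfl, hp⟩ := exists_increasingWalk_of_mem_inBall hu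
  exact ⟨⟨⟨m, hm⟩, p⟩, by simpa using hp, rfl⟩

lemma le_card_cutLabels_sdiff_walkLabel {p : Fin m → V × Fin r} (hp : ∀ i, (p i).1 ≠ w) :
    (Fintype.card V - 1) * r - 1 ≤
      (cutLabels r {w} {w}ᶜ \ Finset.univ.image (walkLabel p w)).card := by
  have hmem : ∀ c ∈ cutLabels r {w} {w}ᶜ, w ∈ c.1 := fun c hc => by
    obtain ⟨u, hu, v, -, heq⟩ := mem_cutLabels.1 hc
    rw [← heq, Finset.mem_singleton.1 hu]
    exact Sym2.mem_mk_left w v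
  have hinter : (Finset.univ.image (walkLabel p w) ∩ cutLabels r {w} {w}ᶜ).card ≤ 1 := by
    refine Finset.card_le_one.2 fun c hc c' hc' => ?_
    simp only [Finset.mem_inter, Finset.mem_image, Finset.mem_univ, true_and] at hc hc'
    obtain ⟨⟨i, rfl⟩, hi⟩ := hc
    obtain ⟨⟨j, rfl⟩, hj⟩ := hc'
    rw [walkLabel_eq_of_mem hp (hmem _ hi) (hmem _ hj)]
  rw [Finset.card_sdiff, card_cutLabels_compl_singleton]
  exact Nat.sub_le_sub_left hinter _

theorem measureReal_increasingWalk_inter_quiet_le (ν : Measure ℝ) [IsProbabilityMeasure ν]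
    (hB : MeasurableSet B) (hI : MeasurableSet I) (p : Fin m → V × Fin r) :
    (labelMeasure V r ν).real (increasingWalk B w p ∩ quiet r I w) ≤
      ν.real B ^ m / m.factorial * ν.real Iᶜ ^ ((Fintype.card V - 1) * r - 1) := by
  rcases (increasingWalk B w p).eq_empty_or_nonempty with hempty | ⟨x₀, hx₀⟩
  · rw [hempty, empty_inter, measureReal_empty]
    positivity
  set D : Set (Sym2 V × Fin r → ℝ) :=
    {x | (StrictMono fun i => x (walkLabel p w i)) ∧ ∀ i, x (walkLabel p w i) ∈ B}
  set F := cutLabels r {w} {w}ᶜ \ Finset.univ.image (walkLabel p w)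
  have hF : (Fintype.card V - 1) * r - 1 ≤ F.card := le_card_cutLabels_sdiff_walkLabel hx₀.1
  have hD : MeasurableSet D := by
    have : Measurable fun (x : Sym2 V × Fin r → ℝ) i => x (walkLabel p w i) := by fun_prop
    exact this (measurableSet_strictMono_forall_mem hB)
  have hdefer := pi_inter_forall_notMem_le (fun _ => ν) hD (fun _ => hI) F fun c hc x hx y _ => by
    have hne : ∀ i, walkLabel p w i ≠ c := fun i heq =>
      (Finset.mem_sdiff.1 hc).2 (heq ▸ Finset.mem_image_of_mem _ (Finset.mem_univ i))
    simpa [D, hne] using hx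
  rw [Finset.prod_const] at hdefer
  calc _ ≤ (labelMeasure V r ν).real (D ∩ {x | ∀ c ∈ F, x c ∉ I}) :=
        measureReal_mono (by
          rintro x ⟨hx, hquiet⟩
          exact ⟨hx.2, fun c hc => hquiet c (Finset.mem_sdiff.1 hc).1⟩) (measure_ne_top _ _)
    _ ≤ ν.real Iᶜ ^ F.card * (labelMeasure V r ν).real D := by
        simpa [measureReal_def] using ENNReal.toReal_mono (by finiteness) hdefer
    _ ≤ ν.real Iᶜ ^ ((Fintype.card V - 1) * r - 1) * (ν.real B ^ m / m.factorial) :=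
        mul_le_mul (pow_le_pow_of_le_one measureReal_nonneg measureReal_le_one hF)
          (pi_real_strictMono_comp_le ν hB (injective_walkLabel hx₀)) measureReal_nonneg
          (by positivity)
    _ = _ := mul_comm _ _

end IncreasingWalks

section LowerBound

lemma sum_pow_div_factorial_le_exp {X : Type*} [Fintype X] (M : ℕ) {y : ℝ} (hy : 0 ≤ y) :
    ∑ p : Σ m : Fin M, Fin m → X, y ^ (p.1 : ℕ) / (p.1 : ℕ).factorial ≤
      Real.exp (Fintype.card X * y) := by
  classical
  calc _ = ∑ m ∈ Finset.range M, (Fintype.card X * y) ^ m / m.factorial := by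
        rw [Fintype.sum_sigma, Finset.sum_range]
        simp [mul_pow, mul_div_assoc]
    _ ≤ _ := Real.sum_le_exp_of_nonneg (by positivity) M

variable {V : Type*} [Fintype V] [DecidableEq V] {r : ℕ} {a : ℝ}

theorem measureReal_quiet_inter_card_le_inBall_le (ν : Measure ℝ) [IsProbabilityMeasure ν]
    {I : Set ℝ} (hI : MeasurableSet I) (t : ℝ) (w : V) :
    Fintype.card V / 4 * (labelMeasure V r ν).real
        (quiet r I w ∩ {x | Fintype.card V ≤ 4 * (inBall (labelGraph x) w t).ncard}) ≤
      Real.exp (Fintype.card V * r * ν.real (Iic t)) *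
        ν.real Iᶜ ^ ((Fintype.card V - 1) * r - 1) := by
  classical
  obtain ⟨M, hM⟩ : ∃ M, M = Fintype.card (Sym2 V × Fin r) + 1 := ⟨_, rfl⟩
  set A : (Σ m : Fin M, Fin m → V × Fin r) → Set (Sym2 V × Fin r → ℝ) := fun p =>
    increasingWalk (Iic t) w p.2 ∩ quiet r I w
  have hsub : quiet r I w ∩ {x | Fintype.card V ≤ 4 * (inBall (labelGraph x) w t).ncard} ⊆
      {x | (Fintype.card V / 4 : ℝ) ≤ (Finset.univ.filter fun p => x ∈ A p).card} := by
    rintro x ⟨hquiet, hx⟩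
    have hcard := ncard_inBall_le_card_increasingWalk (x := x) (w := w) t
    rw [← hM] at hcard
    have : (Fintype.card V : ℝ) ≤ 4 * (Finset.univ.filter fun p => x ∈ A p).card := by
      simp only [A, mem_inter_iff, hquiet, and_true]
      exact mod_cast hx.trans (Nat.mul_le_mul_left 4 hcard)
    exact (div_le_iff₀' four_pos).2 this
  have hsum := mul_measureReal_le_card_le_sum (labelMeasure V r ν) A
    (c := Fintype.card V / 4) (by positivity)
  have hexp := sum_pow_div_factorial_le_exp (X := V × Fin r) M (y := ν.real (Iic t))
    measureReal_nonneg
  rw [Fintype.card_prod, Fintype.card_fin, Nat.cast_mul] at hexp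
  calc _ ≤ _ := mul_le_mul_of_nonneg_left (measureReal_mono hsub (measure_ne_top _ _))
        (by positivity)
    _ ≤ ∑ p, (labelMeasure V r ν).real (A p) := hsum
    _ ≤ ∑ p : Σ m : Fin M, Fin m → V × Fin r, ν.real (Iic t) ^ (p.1 : ℕ) /
          (p.1 : ℕ).factorial * ν.real Iᶜ ^ ((Fintype.card V - 1) * r - 1) :=
        Finset.sum_le_sum fun p _ =>
          measureReal_increasingWalk_inter_quiet_le ν measurableSet_Iic hI p.2
    _ ≤ _ := by
        rw [← Finset.sum_mul]
        exact mul_le_mul_of_nonneg_right hexp (by positivity)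

open scoped Classical in
lemma measureReal_card_quiet_le_half_le (ha : 0 ≤ a) (ha1 : 2 * a ≤ 1)
    (hn : 2 ≤ Fintype.card V) :
    (labelMeasure V r unif01).real {x | (Finset.univ.filter fun w =>
        x ∈ quiet r (Ioc a (2 * a)) w).card ≤
        (Fintype.card V * (1 - a) ^ ((Fintype.card V - 1) * r) / 2 : ℝ)} ≤
      4 / (Fintype.card V * (1 - a) ^ ((Fintype.card V - 1) * r)) + 4 * (1 / (1 - a) ^ r - 1) := by
  set n := Fintype.card V
  set p := (1 - a) ^ ((n - 1) * r)
  have hb : 0 < 1 - a := by linarith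
  have : (0 : ℝ) < n := by positivity
  have hp0 : 0 < p := by positivity
  have hwindow : unif01.real (Ioc a (2 * a))ᶜ = 1 - a := by
    rw [unif01_real_compl_Ioc ha (by linarith) ha1]
    ring
  have hq : (1 - a) ^ ((n - 1) * r + (n - 2) * r) = p ^ 2 / (1 - a) ^ r := by
    rw [eq_div_iff (by positivity), ← pow_add, ← pow_mul]
    congr 1
    obtain ⟨k, hk⟩ := Nat.exists_eq_add_of_le hn
    rw [hk, show 2 + k - 1 = k + 1 by lia, show 2 + k - 2 = k by lia]
    ring
  have hpq : p ^ 2 ≤ p ^ 2 / (1 - a) ^ r :=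
    le_div_self (by positivity) (by positivity) (pow_le_one₀ hb.le (by linarith))
  have hcheb := sq_mul_measureReal_card_le_half_le (labelMeasure V r unif01)
    (A := fun w => quiet r (Ioc a (2 * a)) w) (p := p)
    (fun w => measurableSet_quiet measurableSet_Ioc)
    (fun w => by rw [measureReal_quiet, hwindow]) hpq
    (fun w w' hne => by
      rw [← hq, ← hwindow]
      exact measureReal_quiet_inter_quiet_le unif01 hne) (by positivity)
  rw [← le_div_iff₀' (by positivity)] at hcheb
  refine hcheb.trans_eq ?_
  change (n * p + (n : ℝ) ^ 2 * (p ^ 2 / (1 - a) ^ r - p ^ 2)) / (n * p / 2) ^ 2 = _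
  field_simp
  ring

open scoped Classical in
lemma measureReal_le_card_quiet_inter_inBall_le (ha : 0 ≤ a) (ha1 : 2 * a ≤ 1)
    (hn : 2 ≤ Fintype.card V) (hr : 0 < r) :
    (labelMeasure V r unif01).real {x |
        (Fintype.card V * (1 - a) ^ ((Fintype.card V - 1) * r) / 4 : ℝ) ≤
          (Finset.univ.filter fun w => x ∈ quiet r (Ioc a (2 * a)) w ∩
            {x | Fintype.card V ≤ 4 * (inBall (labelGraph x) w a).ncard}).card} ≤
      16 * (Real.exp (Fintype.card V * r * a) / Fintype.card V) / (1 - a) := by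
  have hb : 0 < 1 - a := by linarith
  have : (0 : ℝ) < Fintype.card V := by positivity
  have hpow : (1 - a) ^ ((Fintype.card V - 1) * r - 1) =
      (1 - a) ^ ((Fintype.card V - 1) * r) / (1 - a) := by
    rw [eq_div_iff hb.ne', ← pow_succ, Nat.sub_add_cancel (Nat.mul_pos (by lia) hr)]
  have hvertex := fun w : V => measureReal_quiet_inter_card_le_inBall_le (r := r) unif01
    (measurableSet_Ioc (a := a) (b := 2 * a)) a w
  simp only [unif01_real_Iic ha (by linarith : a ≤ 1),
    unif01_real_compl_Ioc ha (by linarith : a ≤ 2 * a) ha1, hpow,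
    show 1 - (2 * a - a) = 1 - a by ring] at hvertex
  have hmarkov := (mul_measureReal_le_card_le_sum (labelMeasure V r unif01) (fun w : V =>
    quiet r (Ioc a (2 * a)) w ∩ {x | Fintype.card V ≤ 4 * (inBall (labelGraph x) w a).ncard})
    (c := Fintype.card V * (1 - a) ^ ((Fintype.card V - 1) * r) / 4) (by positivity)).trans
    (Finset.sum_le_card_nsmul _ _ _ fun w _ => (le_div_iff₀' (by positivity)).2 (hvertex w))
  rw [← le_div_iff₀' (by positivity), Finset.card_univ, nsmul_eq_mul] at hmarkov
  refine hmarkov.trans_eq ?_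
  field_simp
  ring

lemma ofReal_le_doubleAll_of_quiet_pair {x : Sym2 V × Fin r → ℝ} {s t : ℝ} {w₁ w₂ : V}
    (hne : w₁ ≠ w₂) (h : ∀ w ∈ ({w₁, w₂} : Set V), x ∈ quiet r (Ioc s t) w ∧
      4 * (inBall (labelGraph x) w s).ncard ≤ Fintype.card V) :
    ENNReal.ofReal t ≤ doubleAll (labelGraph x) := by
  refine ofReal_le_doubleAll_of_pair hne (fun w hw v l hl hlt => ?_) fun w hw => (h w hw).2
  obtain ⟨hvw, i, rfl⟩ := mem_labelGraph.1 hl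
  by_contra! hlt'
  exact mem_quiet.1 (h w hw).1 v hvw i ⟨hlt', hlt⟩

open scoped Classical in
theorem measureReal_not_le_doubleAll_le (ha : 0 ≤ a) (ha1 : 2 * a ≤ 1) (hn : 2 ≤ Fintype.card V)
    (hr : 0 < r) (hnp : 4 ≤ Fintype.card V * (1 - a) ^ ((Fintype.card V - 1) * r)) :
    (labelMeasure V r unif01).real {x | ¬ ENNReal.ofReal (2 * a) ≤ doubleAll (labelGraph x)} ≤
      4 / (Fintype.card V * (1 - a) ^ ((Fintype.card V - 1) * r)) + 4 * (1 / (1 - a) ^ r - 1) +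
        16 * (Real.exp (Fintype.card V * r * a) / Fintype.card V) / (1 - a) := by
  set Q : V → Set (Sym2 V × Fin r → ℝ) := fun w => quiet r (Ioc a (2 * a)) w
  set R : V → Set (Sym2 V × Fin r → ℝ) := fun w =>
    Q w ∩ {x | Fintype.card V ≤ 4 * (inBall (labelGraph x) w a).ncard}
  set d : ℝ := Fintype.card V * (1 - a) ^ ((Fintype.card V - 1) * r)
  have hsub : {x | ¬ ENNReal.ofReal (2 * a) ≤ doubleAll (labelGraph x)} ⊆
      {x | (Finset.univ.filter fun w => x ∈ Q w).card ≤ d / 2} ∪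
        {x | d / 4 ≤ (Finset.univ.filter fun w => x ∈ R w).card} := by
    intro x hx
    by_contra hcon
    simp only [mem_union, mem_ofPred_eq, not_or, not_le] at hcon
    have hcard : 1 < ((Finset.univ.filter fun w => x ∈ Q w) \
        Finset.univ.filter fun w => x ∈ R w).card := by
      have hdiff := Finset.le_card_sdiff (Finset.univ.filter fun w => x ∈ R w)
        (Finset.univ.filter fun w => x ∈ Q w)
      have : ((Finset.univ.filter fun w => x ∈ R w).card + 1 : ℝ) <
        (Finset.univ.filter fun w => x ∈ Q w).card := by linarith
      norm_cast at this
      lia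
    obtain ⟨w₁, h₁, w₂, h₂, hne⟩ := Finset.one_lt_card.1 hcard
    refine hx (ofReal_le_doubleAll_of_quiet_pair (s := a) hne ?_)
    simp only [R, Finset.mem_sdiff, Finset.mem_filter, Finset.mem_univ, true_and, mem_inter_iff,
      not_and] at h₁ h₂
    rintro w (rfl | rfl)
    · exact ⟨h₁.1, (not_le.1 (h₁.2 h₁.1)).le⟩
    · exact ⟨h₂.1, (not_le.1 (h₂.2 h₂.1)).le⟩
  calc _ ≤ _ := measureReal_mono hsub (measure_ne_top _ _)
    _ ≤ _ := measureReal_union_le _ _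
    _ ≤ _ := add_le_add (measureReal_card_quiet_le_half_le ha ha1 hn)
      (measureReal_le_card_quiet_inter_inBall_le ha ha1 hn hr)

lemma exp_neg_div_one_sub_le (ha : a < 1) : Real.exp (-(a / (1 - a))) ≤ 1 - a := by
  have hb : 0 < 1 - a := sub_pos.2 ha
  rw [Real.exp_neg, inv_le_comm₀ (Real.exp_pos _) hb]
  calc (1 - a)⁻¹ = a / (1 - a) + 1 := by field_simp; ring
    _ ≤ _ := Real.add_one_le_exp _

lemma rpow_le_natCast_mul_one_sub_pow {n : ℕ} {κ β : ℝ} (hn : 1 ≤ n) (ha : 0 ≤ a) (ha1 : a < 1)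
    (hlog : n * r * a = κ * Real.log n) (hκ : κ ≤ (1 - β) * (1 - a)) :
    (n : ℝ) ^ β ≤ n * (1 - a) ^ ((n - 1) * r) := by
  have hn0 : (0 : ℝ) < n := mod_cast hn
  have hb : 0 < 1 - a := sub_pos.2 ha1
  have hexp : n * r * (a / (1 - a)) ≤ (1 - β) * Real.log n := by
    rw [← mul_div_assoc, hlog, div_le_iff₀ hb, mul_right_comm]
    exact mul_le_mul_of_nonneg_right hκ (Real.log_natCast_nonneg n)
  calc (n : ℝ) ^ β = n * Real.exp (-((1 - β) * Real.log n)) := by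
        nth_rw 2 [← Real.exp_log hn0]
        rw [Real.rpow_def_of_pos hn0, ← Real.exp_add]
        ring_nf
    _ ≤ n * Real.exp (-(n * r * (a / (1 - a)))) := by gcongr
    _ = n * Real.exp (-(a / (1 - a))) ^ (n * r) := by
        rw [← Real.exp_nat_mul]
        push_cast
        ring_nf
    _ ≤ n * (1 - a) ^ (n * r) := by gcongr; exact exp_neg_div_one_sub_le ha1
    _ ≤ n * (1 - a) ^ ((n - 1) * r) := by
        gcongr ?_ * ?_
        exact pow_le_pow_of_le_one hb.le (by linarith) (by gcongr; lia)

lemma measureReal_not_le_doubleAll_le_rpow {n : ℕ} {α : ℝ} (hn : 2 ≤ n) (hr : 0 < r) (hα : 0 ≤ α)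
    (hα2 : α ≤ 2) (hlog : n * r * a = (1 - α / 2) * Real.log n) (haα : a ≤ α / 4)
    (hfour : 4 ≤ (n : ℝ) ^ (α / 4)) :
    (labelMeasure (Fin n) r unif01).real
        {x | ¬ ENNReal.ofReal (2 * a) ≤ doubleAll (labelGraph x)} ≤
      4 * (n : ℝ) ^ (-(α / 4)) + 4 * (1 / (1 - a) ^ r - 1) +
        16 * (n : ℝ) ^ (-(α / 2)) / (1 - a) := by
  have hn0 : (0 : ℝ) < n := by positivity
  have ha0 : 0 ≤ a := by
    have : 0 ≤ n * r * a := hlog ▸ mul_nonneg (by linarith) (Real.log_natCast_nonneg n)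
    exact nonneg_of_mul_nonneg_right this (by positivity)
  have hmean := rpow_le_natCast_mul_one_sub_pow (by lia) ha0 (by linarith) hlog
    (β := α / 4) (by nlinarith)
  have hexp : Real.exp (n * r * a) / n = (n : ℝ) ^ (-(α / 2)) := by
    rw [hlog, mul_comm, ← Real.rpow_def_of_pos hn0, ← Real.rpow_sub_one hn0.ne']
    ring_nf
  have hbound := measureReal_not_le_doubleAll_le (V := Fin n) (r := r) ha0 (by linarith)
    (by rwa [Fintype.card_fin]) hr (by rw [Fintype.card_fin]; exact hfour.trans hmean)
  rw [Fintype.card_fin, hexp] at hbound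
  refine hbound.trans ?_
  gcongr
  rw [Real.rpow_neg hn0.le, ← div_eq_mul_inv]
  gcongr

theorem tendsto_measureReal_not_le_doubleAll (hr : 0 < r) {α : ℝ} (hα : 0 < α) (hα2 : α ≤ 2) :
    Tendsto (fun n : ℕ => (labelMeasure (Fin n) r unif01).real {x |
      ¬ ENNReal.ofReal ((2 - α) * Real.log n / (r * n)) ≤ doubleAll (labelGraph x)})
      atTop (𝓝 0) := by
  set a : ℕ → ℝ := fun n => (1 - α / 2) * Real.log n / (r * n) with ha_def
  have ha : Tendsto a atTop (𝓝 0) := tendsto_mul_log_div _ _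
  have hlim : Tendsto (fun n : ℕ => 4 * (n : ℝ) ^ (-(α / 4)) + 4 * (1 / (1 - a n) ^ r - 1) +
      16 * (n : ℝ) ^ (-(α / 2)) / (1 - a n)) atTop (𝓝 0) := by
    have hb : Tendsto (fun n => 1 - a n) atTop (𝓝 1) := by simpa using ha.const_sub 1
    have hbr : Tendsto (fun n => 1 / (1 - a n) ^ r - 1) atTop (𝓝 0) := by
      simpa using ((hb.pow r).inv₀ (by simp)).sub_const 1
    have h₁ := (tendsto_natCast_rpow_neg (by positivity : 0 < α / 4)).const_mul 4
    have h₂ := (tendsto_natCast_rpow_neg (by positivity : 0 < α / 2)).const_mul 16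
    simpa using (h₁.add (hbr.const_mul 4)).add (h₂.div hb one_ne_zero)
  have hfour : ∀ᶠ n : ℕ in atTop, 4 ≤ (n : ℝ) ^ (α / 4) :=
    ((tendsto_rpow_atTop (by positivity)).comp tendsto_natCast_atTop_atTop).eventually_ge_atTop 4
  refine squeeze_zero' (.of_forall fun _ => measureReal_nonneg) ?_ hlim
  filter_upwards [eventually_ge_atTop 2, ha.eventually_le_const (by positivity : 0 < α / 4), hfour]
    with n hn haα hfour
  have hlog : n * r * a n = (1 - α / 2) * Real.log n := by simp only [ha_def]; field_simp
  have htwo : (2 - α) * Real.log n / (r * n) = 2 * a n := by simp only [ha_def]; ring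
  rw [htwo]
  exact measureReal_not_le_doubleAll_le_rpow hn hr hα.le hα2 hlog haα hfour

end LowerBound

section Concentration

theorem tendsto_measureReal_doubleAll_mem {r : ℕ} (hr : 0 < r) {α : ℝ} (hα : 0 < α) (hα1 : α ≤ 1) :
    Tendsto (fun n : ℕ => (labelMeasure (Fin n) r unif01).real {x |
        ENNReal.ofReal ((2 - α) * Real.log n / (r * n)) ≤ doubleAll (labelGraph x) ∧
        doubleAll (labelGraph x) ≤ ENNReal.ofReal ((2 + α) * Real.log n / (r * n))})
      atTop (𝓝 1) := by
  have hlim := (((tendsto_measureReal_not_le_doubleAll hr hα (by linarith)).add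
    (tendsto_measureReal_not_doubleAll_le hr hα hα1)).const_sub 1)
  rw [add_zero, sub_zero] at hlim
  refine tendsto_of_tendsto_of_tendsto_of_le_of_le hlim tendsto_const_nhds (fun n => ?_)
    fun n => measureReal_le_one
  set low : Set (Sym2 (Fin n) × Fin r → ℝ) :=
    {x | ¬ ENNReal.ofReal ((2 - α) * Real.log n / (r * n)) ≤ doubleAll (labelGraph x)}
  set high : Set (Sym2 (Fin n) × Fin r → ℝ) :=
    {x | ¬ doubleAll (labelGraph x) ≤ ENNReal.ofReal ((2 + α) * Real.log n / (r * n))}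
  have hcompl : (low ∪ high)ᶜ = {x : Sym2 (Fin n) × Fin r → ℝ |
      ENNReal.ofReal ((2 - α) * Real.log n / (r * n)) ≤ doubleAll (labelGraph x) ∧
      doubleAll (labelGraph x) ≤ ENNReal.ofReal ((2 + α) * Real.log n / (r * n))} := by
    ext x
    simp [low, high]
  have hcover := measureReal_union_le (μ := labelMeasure (Fin n) r unif01) (low ∪ high)
    (low ∪ high)ᶜ
  rw [union_compl_self, probReal_univ, hcompl] at hcover
  have := measureReal_union_le (μ := labelMeasure (Fin n) r unif01) low high
  dsimp only
  linarith

end Concentration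

/-- For the degenerate label multiplicity distribution at `r ≥ 1`, the
doubling time of `Γ_{[n]}(ψ)` is `(2 ± α)·log n/(r·n)` with high probability. -/
theorem statement5 (r : ℕ) (hr : 0 < r) (α : ℝ) (hα : 0 < α) :
    Tendsto (fun n : ℕ =>
        contModel (Fin n) (Measure.dirac r) {ω |
          ENNReal.ofReal ((2 - α) * Real.log n / (r * n)) ≤ doubleAll (toTGraph ω) ∧
          doubleAll (toTGraph ω) ≤ ENNReal.ofReal ((2 + α) * Real.log n / (r * n))})
      atTop (𝓝 1) := by
  have hconc := tendsto_measureReal_doubleAll_mem hr (lt_min hα one_pos) (min_le_right α 1)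
  have hlim := ENNReal.tendsto_ofReal hconc
  rw [ENNReal.ofReal_one] at hlim
  refine tendsto_of_tendsto_of_tendsto_of_le_of_le hlim tendsto_const_nhds (fun n => ?_) fun n => ?_
  · dsimp only
    rw [ofReal_measureReal, contModel, ← map_ofLabels_labelMeasure]
    refine le_trans (measure_mono ?_) (Measure.le_map_apply measurable_ofLabels.aemeasurable _)
    rintro x ⟨hlow, hhigh⟩
    have : 0 ≤ Real.log n := Real.log_natCast_nonneg n
    have hmin : min α 1 ≤ α := min_le_left α 1
    exact ⟨hlow.trans' (by gcongr), hhigh.trans (by gcongr)⟩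
  · have : IsProbabilityMeasure (contModel (Fin n) (Measure.dirac r)) := by
      rw [contModel, ← map_ofLabels_labelMeasure]
      exact Measure.isProbabilityMeasure_map measurable_ofLabels.aemeasurable
    exact prob_le_one

end RTG
end
end

section
/- Let 𝒢=(V,E,λ) be a temporal graph all of whose labels lie in (0,1], let T and β be integers with T ≥ β ≥ 1, and let ℋ be the T-discretization of 𝒢, i.e. the temporal graph obtained from 𝒢 by replacing each label l by ⌈T·l⌉. If ℋ contains (H,P) as a β-temporal motif, for a finite graph H and strict partial order P on its edges, then 𝒢 contains (H,P) as a (β/T)-temporal motif. -/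
open MeasureTheory ProbabilityTheory Filter Set
open scoped ENNReal NNReal Topology

noncomputable section

namespace RTG

section Ceil

variable {R : Type*} [Ring R] [LinearOrder R] [IsOrderedRing R] [FloorRing R]

/-- Integrality sharpens the hypothesis to `⌈x⌉ - ⌈y⌉ ≤ n - 1`, and the unit gained absorbs the
rounding error `⌈y⌉ - y < 1`. -/
theorem sub_lt_of_ceil_sub_ceil_lt {x y : R} {n : ℤ} (h : ⌈x⌉ - ⌈y⌉ < n) : x - y < n := by
  have hceil : ⌈x⌉ ≤ ⌈y⌉ - 1 + n := by lia
  have hy : (⌈y⌉ : R) - 1 < y := sub_lt_iff_lt_add.2 (Int.ceil_lt_add_one y)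
  rw [sub_lt_iff_lt_add']
  calc x ≤ ⌈y⌉ - 1 + n := by exact_mod_cast Int.ceil_le.1 hceil
    _ < y + n := by gcongr

theorem monotone_intCast_ceil_mul {a : R} (ha : 0 ≤ a) :
    Monotone fun x : R => ((⌈a * x⌉ : ℤ) : R) :=
  fun _ _ hxy => Int.cast_mono (Int.ceil_mono (mul_le_mul_of_nonneg_left hxy ha))

end Ceil

section Motif

variable {V VH : Type*} {H : SimpleGraph VH} {P : Sym2 VH → Sym2 VH → Prop} {Λ : TGraph V}

theorem Contains.of_image {g : ℝ → ℝ} {δ ε : ℝ}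
    (hP : ∀ e f, P e f → e ∈ H.edgeSet ∧ f ∈ H.edgeSet) (hg : Monotone g)
    (hgε : ∀ x y, g x - g y < δ → x - y < ε)
    (h : Contains H P (fun e => (Λ e).image g) δ) : Contains H P Λ ε := by
  obtain ⟨Φ, hΦ, lab, hmem, hlt, hwidth⟩ := h
  have hpreimage : ∀ e ∈ H.edgeSet, ∃ l ∈ Λ (Sym2.map Φ e), g l = lab e :=
    fun e he => Finset.mem_image.1 (hmem e he)
  choose! lab' hmem' hlab' using hpreimage
  refine ⟨Φ, hΦ, lab', hmem', fun e f hef => ?_, fun e he f hf => hgε _ _ ?_⟩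
  · obtain ⟨he, hf⟩ := hP e f hef
    apply hg.reflect_lt
    simpa only [hlab' e he, hlab' f hf] using hlt e f hef
  · simpa only [hlab' e he, hlab' f hf] using hwidth e he f hf

theorem statement7_general {T β : ℕ} (hT : 0 < T)
    (hP : ∀ e f, P e f → e ∈ H.edgeSet ∧ f ∈ H.edgeSet)
    (h : Contains H P (discretize T Λ) (β : ℝ)) :
    Contains H P Λ ((β : ℝ) / (T : ℝ)) := by
  refine h.of_image hP (monotone_intCast_ceil_mul T.cast_nonneg) fun x y hxy => ?_
  have hceil : ⌈(T : ℝ) * x⌉ - ⌈(T : ℝ) * y⌉ < (β : ℤ) := by exact_mod_cast hxy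
  have hscaled : (T : ℝ) * x - T * y < β := mod_cast sub_lt_of_ceil_sub_ceil_lt hceil
  rwa [lt_div_iff₀' (Nat.cast_pos.2 hT), mul_sub]

end Motif

/-- If the `T`-discretization of a temporal graph with labels in
`(0,1]` contains `(H, P)` as a `β`-temporal motif, then the original temporal graph
contains `(H, P)` as a `(β/T)`-temporal motif. -/
theorem statement7 {V VH : Type} (Λ : TGraph V)
    (hΛ : ∀ e, ∀ l ∈ Λ e, l ∈ Set.Ioc (0 : ℝ) 1)
    (T β : ℕ) (hβ : 1 ≤ β) (hT : β ≤ T)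
    (H : SimpleGraph VH) (P : Sym2 VH → Sym2 VH → Prop)
    (hP : StrictPartialOrderOn H.edgeSet P)
    (h : Contains H P (discretize T Λ) (β : ℝ)) :
    Contains H P Λ ((β : ℝ) / (T : ℝ)) :=
  statement7_general (hβ.trans hT) hP.2.2 h

end RTG
end
end
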